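/- Let γ ∈ ℝ, let q ≥ 3 be fixed, and let K be a location-scale invariant kernel, not everywhere constant, such that E[|K((Z_{q−j:q−1})_{j=1}^{q})|^p] < ∞ for all p > 0 (Z's iid standard GP(γ), Z_{0:q−1} := 0); set θ = E[K((Z_{q−j:q−1})_{j=1}^{q})]. Let ℓ, m be integers with ℓ ≥ 2 and m ≥ ℓ + q, let Z_1,…,Z_{2m−ℓ} be iid standard GP(γ), and define Ξ_{ℓ,m} = K_m(Z_{[1:m]}) K_m(Z_{[(m−ℓ+1):(2m−ℓ)]}) and N_{ℓ,m} = Σ_{i=m−ℓ+1}^{m} 1{Z_i is in the top-q of Z_{[1:m]} or of Z_{[(m−ℓ+1):(2m−ℓ)]}}. Then E[Ξ_{ℓ,m}; N_{ℓ,m} = 0] = P(N_{ℓ,m} = 0) θ², and |E[Ξ_{ℓ,m}; N_{ℓ,m} = 0] − ℓ E[Ξ_{1,m}; N_{1,m} = 0] + (ℓ−1) θ²| ≤ θ² q² ℓ(ℓ−1) / ((m−1)(m−ℓ+1)). -/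

import Mathlib

open MeasureTheory ProbabilityTheory Filter Real Set Topology
open scoped ENNReal NNReal Classical

noncomputable section

/-- The `j`-th largest entry of the tuple `x` (`j = 0` gives the maximum, `j = 1` the
second largest, ...); `0` when `j` is out of range. -/
def descStat {m : ℕ} (x : Fin m → ℝ) (j : ℕ) : ℝ :=
  if h : j < m then (x ∘ Tuple.sort x) ⟨m - 1 - j, by omega⟩ else 0

/-- The kernel of degree `m` obtained from `K` by applying it to the top-`q`
(descending) order statistics: `K_m(x_1,…,x_m) = K(x_{m:m},…,x_{m−q+1:m})`. -/
def Km {q : ℕ} (K : (Fin q → ℝ) → ℝ) (m : ℕ) (x : Fin m → ℝ) : ℝ :=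
  K fun j => descStat x (j : ℕ)

/-- `K(a x_1 + b, …, a x_q + b) = K(x_1, …, x_q)` for all `a > 0`, `b ∈ ℝ`. -/
def LocScaleInvariant {q : ℕ} (K : (Fin q → ℝ) → ℝ) : Prop :=
  ∀ a b : ℝ, 0 < a → ∀ x : Fin q → ℝ, K (fun j => a * x j + b) = K x

/-- `h_γ(y) = (y^γ - 1)/γ`, interpreted as `log y` when `γ = 0`. -/
def hGamma (γ : ℝ) (y : ℝ) : ℝ := if γ = 0 then Real.log y else (y ^ γ - 1) / γ

lemma measurable_hGamma (γ : ℝ) : Measurable (hGamma γ) := by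
  unfold hGamma
  split_ifs
  · exact Real.measurable_log
  · fun_prop

/-- The uniform distribution on `(0,1)`. -/
def unif01 : Measure ℝ := volume.restrict (Set.Ioo (0:ℝ) 1)

instance : IsProbabilityMeasure unif01 := ⟨by simp [unif01]⟩

/-- The standard Pareto(1) distribution, with cdf `1 - 1/y` for `y ≥ 1`. -/
def pareto1 : Measure ℝ := ProbabilityTheory.paretoMeasure 1 1

instance : IsProbabilityMeasure pareto1 :=
  ProbabilityTheory.isProbabilityMeasure_paretoMeasure one_pos one_pos

/-- The standard generalized Pareto distribution `GP(γ)`: the law of `h_γ(Y)` for `Y`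
standard Pareto(1). -/
def gpMeasure (γ : ℝ) : Measure ℝ := pareto1.map (hGamma γ)

instance (γ : ℝ) : IsProbabilityMeasure (gpMeasure γ) :=
  Measure.isProbabilityMeasure_map (measurable_hGamma γ).aemeasurable

/-- The unit exponential distribution: the law of `-log U` for `U` uniform on `(0,1)`. -/
def expMeasure1 : Measure ℝ := unif01.map fun u => -Real.log u

instance : IsProbabilityMeasure expMeasure1 :=
  Measure.isProbabilityMeasure_map Real.measurable_log.neg.aemeasurable

/-- The Erlang(q) distribution: the law of the sum of `q` independent unit exponentials. -/
def erlangMeasure (q : ℕ) : Measure ℝ :=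
  (Measure.pi fun _ : Fin q => expMeasure1).map fun e => ∑ i, e i

instance (q : ℕ) : IsProbabilityMeasure (erlangMeasure q) :=
  Measure.isProbabilityMeasure_map
    (Finset.measurable_fun_sum _ fun i _ => measurable_pi_apply i).aemeasurable

/-- The joint law of `r` iid `GP(γ)` random variables. -/
def gpPi (γ : ℝ) (r : ℕ) : Measure (Fin r → ℝ) := Measure.pi fun _ => gpMeasure γ

instance (γ : ℝ) (r : ℕ) : IsProbabilityMeasure (gpPi γ r) := by
  unfold gpPi; infer_instance

/-- The vector `(Z_{q-j:q-1})_{j=1}^{q}`: the descending order statistics of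
`z_1,…,z_{q-1}` with an extra last entry `Z_{0:q-1} := 0`. -/
def refVec {q : ℕ} (z : Fin (q-1) → ℝ) : Fin q → ℝ := fun j => descStat z (j : ℕ)

/-- `θ = E[K((Z_{q-j:q-1})_{j=1}^{q})]` for iid `GP(γ)` variables `Z_1,…,Z_{q-1}`. -/
def thetaK (γ : ℝ) {q : ℕ} (K : (Fin q → ℝ) → ℝ) : ℝ :=
  ∫ z, K (refVec z) ∂(gpPi γ (q-1))

/-- all moments of `K((Z_{q-j:q-1})_{j=1}^{q})` are finite. -/
def MomentCond (γ : ℝ) {q : ℕ} (K : (Fin q → ℝ) → ℝ) : Prop :=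
  ∀ p : ℝ, 0 < p →
    ∫⁻ z, ENNReal.ofReal (|K (refVec z)| ^ p) ∂(gpPi γ (q-1)) < ⊤

/-- The asymptotic variance
`σ²_K(γ) = ∫_0^∞ (E[K̄_{q+1}((Z_{q-j:q-1})_{j=1}^q, h_γ(S_q/x))])² dx`. -/
def sigmaSqK (γ : ℝ) {q : ℕ} (K : (Fin q → ℝ) → ℝ) : ℝ :=
  ∫ x in Set.Ioi (0:ℝ),
    (∫ zs : (Fin (q-1) → ℝ) × ℝ,
        (Km K (q+1) (Fin.snoc (refVec zs.1) (hGamma γ (zs.2 / x))) - thetaK γ K)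
      ∂((gpPi γ (q-1)).prod (erlangMeasure q))) ^ 2

/-- The U-statistic with kernel `K_m` evaluated on the sample `z`. -/
def UStat {q : ℕ} (K : (Fin q → ℝ) → ℝ) (m n : ℕ) (z : Fin n → ℝ) : ℝ :=
  ((n.choose m : ℝ))⁻¹ *
    ∑ I ∈ Finset.powersetCard m (Finset.univ : Finset (Fin n)),
      Km K I.card fun j => z (I.orderIsoOfFin rfl j).1

/-- Condition on the degree sequence: `m = o(n^{1-ε})` and `log n = o(m^{1-δ})`. -/
def DegreeCond (m : ℕ → ℕ) : Prop :=
  ∃ ε > (0:ℝ), ∃ δ > (0:ℝ),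
    Tendsto (fun n => (m n : ℝ) / (n : ℝ) ^ (1 - ε)) atTop (𝓝 0) ∧
    Tendsto (fun n : ℕ => Real.log n / (m n : ℝ) ^ (1 - δ)) atTop (𝓝 0)

/-- `ζ_{m,ℓ} = cov(K_m(Z_S), K_m(Z_{S'}))` for the blocks `S = [1:m]`,
`S' = [(m-ℓ+1):(2m-ℓ)]` (zero-indexed here), which overlap in `ℓ` indices. -/
def zetaCov {Ω : Type*} [MeasurableSpace Ω] (P : Measure Ω) {q : ℕ}
    (K : (Fin q → ℝ) → ℝ) (Z : ℕ → Ω → ℝ) (m ℓ : ℕ) : ℝ :=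
  (∫ ω, Km K m (fun i : Fin m => Z i ω) * Km K m (fun i : Fin m => Z (m - ℓ + i) ω) ∂P)
    - (∫ ω, Km K m (fun i : Fin m => Z i ω) ∂P)
      * (∫ ω, Km K m (fun i : Fin m => Z (m - ℓ + i) ω) ∂P)

/-- Convergence in distribution to a Gaussian, expressed via pointwise convergence of
the cumulative distribution functions (the Gaussian cdf being continuous). -/
def TendstoGaussian {Ω : Type*} [MeasurableSpace Ω] (P : Measure Ω)
    (T : ℕ → Ω → ℝ) (μ : ℝ) (v : ℝ≥0) : Prop :=
  ∀ x : ℝ, Tendsto (fun n => (P {ω | T n ω ≤ x}).toReal) atTop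
    (𝓝 ((gaussianReal μ v (Set.Iic x)).toReal))

/-- Convergence in probability to the constant `c`. -/
def TendstoInProb {Ω : Type*} [MeasurableSpace Ω] (P : Measure Ω)
    (T : ℕ → Ω → ℝ) (c : ℝ) : Prop :=
  ∀ ε : ℝ, 0 < ε → Tendsto (fun n => (P {ω | ε ≤ |T n ω - c|}).toReal) atTop (𝓝 0)


/-- `Z_i` is among the `q` largest of the values `(Z_a)_{a ∈ S}` (for `i ∈ S`):
fewer than `q` members of `S` are strictly larger. -/
def inTopQ (q : ℕ) {Ω : Type*} (Z : ℕ → Ω → ℝ) (S : Finset ℕ) (i : ℕ) (ω : Ω) : Prop :=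
  (S.filter fun a => Z i ω < Z a ω).card < q

/-- The counting variable `N_{ℓ,m}`: the number of `i ∈ [(m-ℓ+1):m]` such that `Z_i` is
in the top-`q` of `Z_{[1:m]}` or of `Z_{[(m-ℓ+1):(2m-ℓ)]}`. -/
def Ncount (q : ℕ) {Ω : Type*} (Z : ℕ → Ω → ℝ) (ℓ m : ℕ) (ω : Ω) : ℕ :=
  ((Finset.Icc (m - ℓ + 1) m).filter fun i =>
    inTopQ q Z (Finset.Icc 1 m) i ω ∨
      inTopQ q Z (Finset.Icc (m - ℓ + 1) (2 * m - ℓ)) i ω).card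

/-- The kernel `K_{|S|}` applied to the subsample `(Z_a)_{a ∈ S}`. -/
def KmOn {q : ℕ} (K : (Fin q → ℝ) → ℝ) {Ω : Type*} (Z : ℕ → Ω → ℝ)
    (S : Finset ℕ) (ω : Ω) : ℝ :=
  Km K S.card fun j => Z (S.orderIsoOfFin rfl j).1 ω

/-- `Ξ_{ℓ,m} = K_m(Z_{[1:m]}) K_m(Z_{[(m-ℓ+1):(2m-ℓ)]})`. -/
def XiRV {q : ℕ} (K : (Fin q → ℝ) → ℝ) {Ω : Type*} (Z : ℕ → Ω → ℝ)
    (ℓ m : ℕ) (ω : Ω) : ℝ :=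
  KmOn K Z (Finset.Icc 1 m) ω * KmOn K Z (Finset.Icc (m - ℓ + 1) (2 * m - ℓ)) ω

/-!
Write `m = n + ℓ`. The two windows are the common block of length `ℓ`, preceded or followed by an
outer block of length `n`, and `N = 0` says that each outer block has at least `q` entries above
the maximum `M` of the common block. On this event `Ξ` only depends on the outer blocks. Given that
a block has at least `q` entries above `M`, its top-`q`, rescaled by its `q`-th largest entry, is a
family of `q - 1` iid exceedances of a threshold followed by `0`; the threshold stability of `GP(γ)`
makes its law that of the reference vector, whatever `M` is. So the two kernels are conditionally
independent with mean `θ`, which is the identity.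

The inequality thus reduces to the probabilities of `N = 0`. The tail probability `U` of `M` is the
minimum of `ℓ` uniform variables, and with `B` the Binomial(`n`, `u`) probability of fewer than `q`
successes, `P(N ≠ 0) = ℓ ∫ (1 - u)^(ℓ-1) (1 - (1 - B(u))²) du`. When `ℓ` increases by
one at fixed `m`, so that the outer blocks shrink from `n + 1` to `n`, the integral decreases by at
most `q² / ((n + 1) (n + 2))`, and these bounds telescope.
-/

open scoped Finset

section OrderStatistics

variable {m n : ℕ} {x : Fin m → ℝ} {k : ℕ}

lemma le_descStat_iff (hk : k < m) {t : ℝ} : t ≤ descStat x k ↔ k < #{a | t ≤ x a} := by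
  set y := x ∘ Tuple.sort x
  have hmono : Monotone y := Tuple.monotone_sort x
  have hcard : #{a | t ≤ x a} = #{a | t ≤ y a} :=
    (Finset.card_equiv (Tuple.sort x) fun i => by simp [y]).symm
  have hstat : descStat x k = y ⟨m - 1 - k, by omega⟩ := dif_pos hk
  rw [hcard, hstat]
  constructor <;> intro h
  · have hsub : Finset.Ici (⟨m - 1 - k, by omega⟩ : Fin m) ⊆ ({a | t ≤ y a} : Finset _) :=
      fun a ha => by simpa using h.trans (hmono (Finset.mem_Ici.1 ha))
    have := Finset.card_le_card hsub
    simp only [Fin.card_Ici] at this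
    omega
  · by_contra! hlt
    have hsub : ({a | t ≤ y a} : Finset _) ⊆ Finset.Ioi (⟨m - 1 - k, by omega⟩ : Fin m) :=
      fun a ha => Finset.mem_Ioi.2 <| hmono.reflect_lt <| hlt.trans_le (Finset.mem_filter.1 ha).2
    have := Finset.card_le_card hsub
    simp only [Fin.card_Ioi] at this
    omega

lemma descStat_of_le (hk : m ≤ k) : descStat x k = 0 :=
  dif_neg hk.not_gt

lemma exists_eq_descStat (hk : k < m) : ∃ j, x j = descStat x k :=
  ⟨Tuple.sort x ⟨m - 1 - k, by omega⟩, by simp [descStat, hk]⟩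

lemma descStat_eq_iff (hk : k < m) {c : ℝ} :
    descStat x k = c ↔ ∀ t, k < #{a | t ≤ x a} ↔ t ≤ c := by
  simp only [← le_descStat_iff hk]
  exact ⟨fun h t => by rw [h], fun h => eq_of_forall_le_iff h⟩

lemma lt_descStat_iff (hk : k < m) {t : ℝ} : t < descStat x k ↔ k < #{a | t < x a} := by
  constructor <;> intro h
  · exact ((le_descStat_iff hk).1 le_rfl).trans_le <|
      Finset.card_le_card <| Finset.monotone_filter_right _ fun a _ ha => h.trans_le ha
  · by_contra! hle
    obtain ⟨a, ha, hmin⟩ := Finset.exists_min_image ({a | t < x a} : Finset _) x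
      (Finset.card_pos.1 (by omega))
    have hsub : ({a | t < x a} : Finset _) ⊆ ({b | x a ≤ x b} : Finset _) :=
      fun b hb => by simpa using hmin b hb
    have := (le_descStat_iff hk).2 (h.trans_le (Finset.card_le_card hsub))
    exact ((Finset.mem_filter.1 ha).2.trans_le (this.trans hle)).false

lemma descStat_of_card_lt_eq {j : Fin m} (hj : #{b | x j < x b} = k) : descStat x k = x j := by
  have hcard : #(insert j ({b | x j < x b} : Finset _)) = k + 1 := by
    rw [Finset.card_insert_of_notMem (by simp), hj]
  have hk : k < m := by
    have := Finset.card_le_univ (insert j ({b | x j < x b} : Finset _))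
    simp only [Fintype.card_fin] at this
    omega
  refine le_antisymm (not_lt.1 fun h => ((lt_descStat_iff hk).1 h).ne' hj) ?_
  have hsub : insert j ({b | x j < x b} : Finset _) ⊆ ({b | x j ≤ x b} : Finset _) := fun b hb => by
    rcases Finset.mem_insert.1 hb with rfl | hb
    · simp
    · simpa using (Finset.mem_filter.1 hb).2.le
  have := Finset.card_le_card hsub
  exact (le_descStat_iff hk).2 (by omega)

lemma card_lt_eq_of_eq_descStat (hx : x.Injective) (hk : k < m) {j : Fin m}
    (hj : x j = descStat x k) : #{b | x j < x b} = k := by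
  refine le_antisymm (not_lt.1 fun h => ((lt_descStat_iff hk).2 h).ne hj) ?_
  have hsub : ({b | x j ≤ x b} : Finset _) ⊆ insert j ({b | x j < x b} : Finset _) := fun b hb => by
    rcases (Finset.mem_filter.1 hb).2.eq_or_lt with h | h
    · simp [hx h]
    · simp [h]
  have := Finset.card_le_card hsub
  rw [Finset.card_insert_of_notMem (by simp)] at this
  have := (le_descStat_iff hk).1 hj.le
  omega

lemma descStat_mul_add (hk : k < m) {a : ℝ} (ha : 0 < a) (b : ℝ) :
    descStat (fun i => a * x i + b) k = a * descStat x k + b := by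
  refine (descStat_eq_iff hk).2 fun t => ?_
  have hle (y : ℝ) : t ≤ a * y + b ↔ (t - b) / a ≤ y := by
    rw [div_le_iff₀' ha, sub_le_iff_le_add]
  simp only [hle, le_descStat_iff hk]

lemma descStat_comp_of_injective {f : Fin n → Fin m} (hf : f.Injective) (hk : k < n)
    (hout : ∀ b ∉ range f, k < #{i | x b ≤ x (f i)}) :
    descStat (x ∘ f) k = descStat x k := by
  have hkm : k < m := hk.trans_le (by simpa using Fintype.card_le_of_injective f hf)
  refine (descStat_eq_iff hk).2 fun t => ?_
  rw [le_descStat_iff hkm]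
  have himage : #(({i | t ≤ x (f i)} : Finset _).map ⟨f, hf⟩) = #{i | t ≤ x (f i)} :=
    Finset.card_map _
  constructor <;> intro h
  · simp only [Function.comp_apply] at h
    rw [← himage] at h
    exact h.trans_le (Finset.card_le_card fun a => by simp; grind)
  · by_cases hb : ∃ b ∉ range f, t ≤ x b
    · obtain ⟨b, hb, htb⟩ := hb
      exact (hout b hb).trans_le <|
        Finset.card_le_card <| Finset.monotone_filter_right _ fun i _ hi => htb.trans hi
    · push Not at hb
      simp only [Function.comp_apply]
      rw [← himage]
      refine h.trans_le (Finset.card_le_card fun a ha => ?_)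
      have hta := (Finset.mem_filter.1 ha).2
      obtain ⟨i, rfl⟩ : a ∈ range f := by_contra fun hmem => (hb a hmem).not_ge hta
      simpa using hta

lemma measurable_descStat (k : ℕ) : Measurable fun x : Fin m → ℝ => descStat x k := by
  by_cases hk : k < m
  · refine measurable_of_Ici fun t => ?_
    have : (fun x : Fin m → ℝ => descStat x k) ⁻¹' Ici t = {x | k < #{a | t ≤ x a}} :=
      Set.ext fun x => le_descStat_iff hk
    rw [this]
    simp only [Finset.card_filter]
    exact measurableSet_lt measurable_const <| Finset.measurable_fun_sum _ fun a _ =>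
      Measurable.ite (measurableSet_le measurable_const (measurable_pi_apply a))
        measurable_const measurable_const
  · simp only [descStat_of_le (not_lt.1 hk)]
    exact measurable_const

variable {q : ℕ} {K : (Fin q → ℝ) → ℝ}

lemma measurable_Km (hK : Measurable K) (m : ℕ) : Measurable (Km K m) :=
  hK.comp (measurable_pi_lambda _ fun _ => measurable_descStat _)

lemma measurable_refVec : Measurable (refVec : (Fin (q - 1) → ℝ) → Fin q → ℝ) :=
  measurable_pi_lambda _ fun _ => measurable_descStat _

lemma Km_congr_of_injective {f : Fin n → Fin m} (hf : f.Injective) (hq : q ≤ n)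
    (hout : ∀ b ∉ range f, q ≤ #{i | x b ≤ x (f i)}) :
    Km K n (x ∘ f) = Km K m x :=
  congrArg K <| funext fun j => descStat_comp_of_injective hf (j.2.trans_le hq)
    fun b hb => j.2.trans_le (hout b hb)

/-- Rescaling by the `q`-th largest entry turns the top-`q` into the `q - 1` exceedances of it,
followed by the `0` that ends `refVec`. -/
lemma Km_eq_refVec_exceedances (hLS : LocScaleInvariant K) (j : Fin m)
    {e : Fin (q - 1) → Fin m} (he : e.Injective) (hrange : ∀ b, x j < x b ↔ b ∈ range e)
    {a : ℝ} (ha : 0 < a) :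
    Km K m x = K (refVec fun i => (x (e i) - x j) / a) := by
  have hcard : #{b | x j < x b} = q - 1 := by
    have himage : ({b | x j < x b} : Finset _) = Finset.univ.image e := by ext b; simp [hrange]
    rw [himage, Finset.card_image_of_injective _ he, Finset.card_fin]
  rw [← hLS a (x j) ha]
  refine congrArg K (funext fun k => ?_)
  rcases (Nat.le_sub_one_of_lt k.2).lt_or_eq with hk | hk
  · rw [refVec, ← descStat_mul_add hk ha, ← descStat_comp_of_injective he hk fun b hb => ?_]
    · simp [Function.comp_def, mul_div_cancel₀ _ ha.ne']
    · have hlt (i) : x b ≤ x (e i) :=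
        (not_lt.1 (mt (hrange b).1 hb)).trans ((hrange (e i)).2 (mem_range_self i)).le
      simpa [hlt] using hk
  · rw [refVec, descStat_of_le hk.ge, mul_zero, zero_add, hk, descStat_of_card_lt_eq hcard]

lemma Km_insertNth (hLS : LocScaleInvariant K) (j : Fin (m + 1)) {t : ℝ}
    {e : Fin (q - 1) → Fin m} (he : e.Injective) (hrange : ∀ b, t < x b ↔ b ∈ range e)
    {a : ℝ} (ha : 0 < a) :
    Km K (m + 1) (j.insertNth t x) = K (refVec fun i => (x (e i) - t) / a) := by
  rw [Km_eq_refVec_exceedances hLS j (e := j.succAbove ∘ e)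
    (Fin.succAbove_right_injective.comp he) ?_ ha]
  · simp
  · refine (Fin.forall_iff_succAbove j).2 ⟨by simp [Fin.succAbove_ne], fun b => ?_⟩
    simp [hrange]

lemma card_lt_eq_card_lt_succAbove (x : Fin (m + 1) → ℝ) (j : Fin (m + 1)) :
    #{b | x j < x b} = #{b | x j < x (j.succAbove b)} := by
  rw [Finset.card_filter, Fin.sum_univ_succAbove _ j, Finset.card_filter, if_neg (lt_irrefl _),
    zero_add]

end OrderStatistics

section ConditionalLaw

variable {X Y W V ι : Type*} [MeasurableSpace X] [MeasurableSpace Y] [MeasurableSpace W]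
  [MeasurableSpace V]

/-- Conditionally on the event `E`, the variable `f` has law `ρ`. The definition multiplies through
by `μ E`, so that it is vacuous for null events and additive in `E`. -/
def HasCondLaw (f : X → W) (ρ : Measure W) (μ : Measure X) (E : Set X) : Prop :=
  (μ.restrict E).map f = μ E • ρ

namespace HasCondLaw

variable {f : X → W} {ρ : Measure W} {μ : Measure X} {E : Set X}

lemma congr_set {F : Set X} (h : HasCondLaw f ρ μ E) (hEF : E =ᵐ[μ] F) : HasCondLaw f ρ μ F := by
  rwa [HasCondLaw, ← Measure.restrict_congr_set hEF, ← measure_congr hEF]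

lemma congr_fun {g : X → W} (h : HasCondLaw f ρ μ E) (hfg : f =ᵐ[μ.restrict E] g) :
    HasCondLaw g ρ μ E := by
  rwa [HasCondLaw, ← Measure.map_congr hfg]

lemma iUnion [Countable ι] {E : ι → Set X} (h : ∀ i, HasCondLaw f ρ μ (E i)) (hf : Measurable f)
    (hdisj : Pairwise (Function.onFun (AEDisjoint μ) E)) (hE : ∀ i, MeasurableSet (E i)) :
    HasCondLaw f ρ μ (⋃ i, E i) := by
  have hnull i := (hE i).nullMeasurableSet (μ := μ)
  ext S hS
  rw [Measure.restrict_iUnion_ae hdisj hnull, Measure.map_apply hf hS,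
    Measure.sum_apply _ (hf hS), Measure.smul_apply, smul_eq_mul, measure_iUnion₀ hdisj hnull,
    ← ENNReal.tsum_mul_right]
  refine tsum_congr fun i => ?_
  rw [← Measure.map_apply hf hS, h i, Measure.smul_apply, smul_eq_mul]

lemma comp_measurePreserving {μ' : Measure Y} {e : Y → X} (h : HasCondLaw f ρ μ E)
    (he : MeasurePreserving e μ' μ) (hf : Measurable f) (hE : MeasurableSet E) :
    HasCondLaw (f ∘ e) ρ μ' (e ⁻¹' E) := by
  rw [HasCondLaw, ← Measure.map_map hf he.measurable,
    (he.restrict_preimage hE).map_eq, h, he.measure_preimage hE.nullMeasurableSet]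

lemma of_comp_map {μ' : Measure Y} {e : Y → X} (he : Measurable e) (hf : Measurable f)
    (hE : MeasurableSet E) (h : HasCondLaw (f ∘ e) ρ μ' (e ⁻¹' E)) :
    HasCondLaw f ρ (μ'.map e) E := by
  rw [HasCondLaw, Measure.restrict_map he hE, Measure.map_map hf he, h, Measure.map_apply he hE]

lemma comp_left {g : W → V} (h : HasCondLaw f ρ μ E) (hg : Measurable g) (hf : Measurable f) :
    HasCondLaw (g ∘ f) (ρ.map g) μ E := by
  rw [HasCondLaw, ← Measure.map_map hg hf, h, Measure.map_smul]

lemma prodMap {ν : Measure Y} {g : Y → V} {σ : Measure V} {F : Set Y} [SFinite μ] [SFinite ν]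
    [SFinite σ]
    (h : HasCondLaw f ρ μ E) (h' : HasCondLaw g σ ν F) (hf : Measurable f) (hg : Measurable g) :
    HasCondLaw (Prod.map f g) (ρ.prod σ) (μ.prod ν) (E ×ˢ F) := by
  rw [HasCondLaw, ← Measure.prod_restrict, ← Measure.map_prod_map _ _ hf hg, h, h',
    Measure.prod_prod, Measure.prod_smul_left, Measure.prod_smul_right, smul_smul]

lemma of_ae_fiber {ν : Measure Y} {f : X × Y → W} {E : Set (X × Y)} [SFinite ν]
    (h : ∀ᵐ x ∂μ, HasCondLaw (fun y => f (x, y)) ρ ν (Prod.mk x ⁻¹' E)) (hf : Measurable f)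
    (hE : MeasurableSet E) : HasCondLaw f ρ (μ.prod ν) E := by
  ext S hS
  have hfiber (x : X) : Measurable fun y => f (x, y) := hf.comp measurable_prodMk_left
  rw [Measure.map_apply hf hS, Measure.restrict_apply (hf hS), Measure.smul_apply, smul_eq_mul,
    Measure.prod_apply ((hf hS).inter hE), Measure.prod_apply hE,
    ← lintegral_mul_const _ (measurable_measure_prodMk_left hE)]
  refine lintegral_congr_ae (h.mono fun x hx => ?_)
  have := congrArg (· S) hx
  rwa [Measure.map_apply (hfiber x) hS, Measure.restrict_apply (hfiber x hS)] at this

lemma pi [Fintype ι] {X W : ι → Type*} [∀ i, MeasurableSpace (X i)] [∀ i, MeasurableSpace (W i)]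
    {f : ∀ i, X i → W i} {ρ : ∀ i, Measure (W i)} {μ : ∀ i, Measure (X i)} {E : ∀ i, Set (X i)}
    [∀ i, SigmaFinite (ρ i)] [∀ i, IsFiniteMeasure (μ i)]
    (h : ∀ i, HasCondLaw (f i) (ρ i) (μ i) (E i)) (hf : ∀ i, Measurable (f i)) :
    HasCondLaw (fun x i => f i (x i)) (Measure.pi ρ) (Measure.pi μ) (univ.pi E) := by
  rw [HasCondLaw, Measure.restrict_pi_pi, Measure.pi_map_pi (fun i => (hf i).aemeasurable)]
  refine Measure.pi_eq fun S _ => ?_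
  have hval (i) : ((μ i).restrict (E i)).map (f i) (S i) = μ i (E i) * ρ i (S i) :=
    congrArg (· (S i)) (h i)
  simp [hval, Finset.prod_mul_distrib]

lemma integrableOn_comp {g : W → ℝ} [IsFiniteMeasure μ] (h : HasCondLaw f ρ μ E)
    (hf : Measurable f) (hg : Integrable g ρ) : IntegrableOn (fun x => g (f x)) E μ := by
  have : Integrable g ((μ.restrict E).map f) := by
    rw [h]
    exact hg.smul_measure (measure_ne_top μ E)
  exact this.comp_measurable hf

lemma setIntegral_comp {g : W → ℝ} (h : HasCondLaw f ρ μ E) (hf : Measurable f)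
    (hg : Measurable g) : ∫ x in E, g (f x) ∂μ = μ.real E * ∫ w, g w ∂ρ := by
  rw [← integral_map hf.aemeasurable hg.aestronglyMeasurable, h, integral_smul_measure]
  rfl

end HasCondLaw

end ConditionalLaw

section ProductMeasure

variable {ι κ X W : Type*} [Fintype ι] [Fintype κ] [MeasurableSpace X] [MeasurableSpace W]

lemma pi_map_comp_injective {α : ι → Type*} [∀ i, MeasurableSpace (α i)]
    (μ : ∀ i, Measure (α i)) [∀ i, IsProbabilityMeasure (μ i)] {e : κ → ι} (he : e.Injective) :
    (Measure.pi μ).map (fun x k => x (e k)) = Measure.pi fun k => μ (e k) := by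
  have hindep : iIndepFun (fun k (x : ∀ i, α i) => x (e k)) (Measure.pi μ) :=
    (iIndepFun_pi (X := fun _ => id) fun _ => aemeasurable_id).precomp he
  rw [(iIndepFun_iff_map_fun_eq_pi_map fun k => (measurable_pi_apply (e k)).aemeasurable).1 hindep]
  simp_rw [(measurePreserving_eval μ (e _)).map_eq]

lemma ae_pi_injective (μ : Measure ℝ) [IsProbabilityMeasure μ] [NullSingletonClass μ] :
    ∀ᵐ x ∂Measure.pi fun _ : ι => μ, x.Injective := by
  suffices h : ∀ i j, i ≠ j → ∀ᵐ x ∂Measure.pi fun _ : ι => μ, x i ≠ x j by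
    have h' : ∀ᵐ x ∂Measure.pi fun _ : ι => μ, ∀ i j, i ≠ j → x i ≠ x j := by
      simpa only [ae_all_iff] using h
    exact h'.mono fun x hx i j => not_imp_not.1 (hx i j)
  intro i j hij
  have hpair : (Measure.pi fun _ : ι => μ).map (fun x => (x i, x j)) = μ.prod μ := by
    have hindep : iIndepFun (fun k (x : ι → ℝ) => x k) (Measure.pi fun _ => μ) :=
      iIndepFun_pi (X := fun _ => id) fun _ => aemeasurable_id
    rw [(indepFun_iff_map_prod_eq_prod_map_map (measurable_pi_apply i).aemeasurable
      (measurable_pi_apply j).aemeasurable).1 (hindep.indepFun hij)]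
    simp_rw [(measurePreserving_eval (fun _ : ι => μ) _).map_eq]
  have hdiag : (μ.prod μ) {p | p.1 = p.2} = 0 :=
    (Measure.measure_prod_null (measurableSet_eq_fun measurable_fst measurable_snd)).2 <|
      .of_forall fun t => by
        have hfiber : Prod.mk t ⁻¹' {p | p.1 = p.2} = {t} := by
          ext
          simp [eq_comm]
        exact (congrArg μ hfiber).trans (measure_singleton t)
  rw [← hpair] at hdiag
  exact ae_of_ae_map (f := fun x : ι → ℝ => (x i, x j)) (p := fun p => p.1 ≠ p.2) (by fun_prop)
    (by simpa [ae_iff] using hdiag)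

lemma HasCondLaw.pi_comp_injective {f : X → W} {ρ : Measure W} {μ : Measure X} {E : Set X}
    [IsProbabilityMeasure ρ] [IsProbabilityMeasure μ] (h : HasCondLaw f ρ μ E) (hf : Measurable f)
    {e : κ → ι} [∀ i, Decidable (i ∈ range e)] (he : e.Injective) (F : Set X) :
    HasCondLaw (fun x k => f (x (e k))) (Measure.pi fun _ => ρ) (Measure.pi fun _ => μ)
      (univ.pi fun i => if i ∈ range e then E else F) := by
  obtain ⟨w⟩ : Nonempty W := nonempty_of_isProbabilityMeasure ρ
  let g (i : ι) (x : X) : W := if i ∈ range e then f x else w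
  let σ (i : ι) : Measure W := if i ∈ range e then ρ else Measure.dirac w
  have hσ (i) : IsProbabilityMeasure (σ i) := by dsimp only [σ]; split_ifs <;> infer_instance
  have hg (i) : Measurable (g i) := by
    dsimp only [g]; split_ifs <;> fun_prop
  have hlaw (i) : HasCondLaw (g i) (σ i) μ (if i ∈ range e then E else F) := by
    by_cases hi : i ∈ range e
    · simpa only [g, σ, if_pos hi] using h
    · simp only [g, σ, if_neg hi, HasCondLaw, Measure.map_const, Measure.restrict_apply_univ]
  have := (HasCondLaw.pi hlaw hg).comp_left (g := fun x k => x (e k)) (by fun_prop) (by fun_prop)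
  rw [pi_map_comp_injective σ he] at this
  simpa [g, σ, Function.comp_def] using this

end ProductMeasure

section ThresholdStability

/-- A law on `ℝ` is threshold stable if, after rescaling, its exceedances over almost every
threshold `t` follow the law itself. -/
def ThresholdStable (ν : Measure ℝ) : Prop :=
  ∀ᵐ t ∂ν, ∃ a > 0, HasCondLaw (fun z => (z - t) / a) ν ν (Ioi t)

/-- The law of `K((Z_{q-j:q-1})_{j=1}^q)` for iid `Z` with law `ν`. -/
def kernelLaw (ν : Measure ℝ) {q : ℕ} (K : (Fin q → ℝ) → ℝ) : Measure ℝ :=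
  (Measure.pi fun _ : Fin (q - 1) => ν).map fun z => K (refVec z)

variable {ν : Measure ℝ} [IsProbabilityMeasure ν] {q n : ℕ} {K : (Fin q → ℝ) → ℝ}

lemma hasCondLaw_Km_of_exceedances (hν : ThresholdStable ν) (hK : Measurable K)
    (hLS : LocScaleInvariant K) (M : ℝ) (j : Fin (n + 1)) {e : Fin (q - 1) → Fin n}
    (he : e.Injective) :
    HasCondLaw (Km K (n + 1)) (kernelLaw ν K) (Measure.pi fun _ => ν)
      {z | M < z j ∧ ∀ b, z j < z (j.succAbove b) ↔ b ∈ range e} := by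
  let split := MeasurableEquiv.piFinSuccAbove (fun _ : Fin (n + 1) => ℝ) j
  have hmeas : MeasurableSet {p : ℝ × (Fin n → ℝ) | M < p.1 ∧ ∀ b, p.1 < p.2 b ↔ b ∈ range e} := by
    measurability
  suffices h : HasCondLaw (Km K (n + 1) ∘ split.symm) (kernelLaw ν K)
      (ν.prod (Measure.pi fun _ => ν)) {p | M < p.1 ∧ ∀ b, p.1 < p.2 b ↔ b ∈ range e} by
    have := h.comp_measurePreserving (measurePreserving_piFinSuccAbove (fun _ => ν) j)
      ((measurable_Km hK _).comp split.symm.measurable) hmeas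
    rwa [Function.comp_assoc, show split.symm ∘ split = id from split.symm_comp_self] at this
  refine HasCondLaw.of_ae_fiber (hν.mono fun t ⟨a, ha, hlaw⟩ => ?_)
    ((measurable_Km hK _).comp split.symm.measurable) hmeas
  by_cases hM : M < t
  · have hbox : Prod.mk t ⁻¹' {p : ℝ × (Fin n → ℝ) | M < p.1 ∧ ∀ b, p.1 < p.2 b ↔ b ∈ range e}
        = univ.pi fun b => if b ∈ range e then Ioi t else Iic t := by
      ext w
      simp only [mem_preimage, mem_ofPred_eq, hM, true_and, mem_univ_pi]
      refine forall_congr' fun b => ?_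
      by_cases hb : b ∈ range e <;> simp [hb]
    rw [hbox]
    have href := (hlaw.pi_comp_injective (by fun_prop) he (Iic t)).comp_left
      (g := fun z => K (refVec z)) (hK.comp measurable_refVec) (by fun_prop)
    refine href.congr_fun ?_
    filter_upwards [ae_restrict_mem (hbox ▸ measurable_prodMk_left hmeas)] with w hw
    rw [← hbox] at hw
    exact (Km_insertNth hLS j he hw.2 ha).symm
  · simp [HasCondLaw, hM]

theorem hasCondLaw_Km_lt_descStat [NullSingletonClass ν] (hν : ThresholdStable ν)
    (hK : Measurable K) (hLS : LocScaleInvariant K) (hq : 1 ≤ q) (hqn : q ≤ n) (M : ℝ) :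
    HasCondLaw (Km K n) (kernelLaw ν K) (Measure.pi fun _ => ν) {z | M < descStat z (q - 1)} := by
  obtain ⟨n, rfl⟩ := Nat.exists_eq_add_of_le' (hq.trans hqn)
  let E (p : Fin (n + 1) × {I : Finset (Fin n) // #I = q - 1}) : Set (Fin (n + 1) → ℝ) :=
    {z | M < z p.1 ∧ ∀ b, z p.1 < z (p.1.succAbove b) ↔ b ∈ p.2.1}
  have hlaw (p) : HasCondLaw (Km K (n + 1)) (kernelLaw ν K) (Measure.pi fun _ => ν) (E p) := by
    have := hasCondLaw_Km_of_exceedances hν hK hLS M p.1 (e := p.2.1.orderEmbOfFin p.2.2)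
      (Finset.orderEmbOfFin p.2.1 p.2.2).injective
    simpa using this
  have hE (p) : MeasurableSet (E p) := by
    dsimp only [E]
    measurability
  have hexceed {z : Fin (n + 1) → ℝ} {p} (hz : z ∈ E p) :
      ({b | z p.1 < z (p.1.succAbove b)} : Finset _) = p.2.1 := by
    ext b
    simpa using hz.2 b
  have hstat {z : Fin (n + 1) → ℝ} {p} (hz : z ∈ E p) : descStat z (q - 1) = z p.1 :=
    descStat_of_card_lt_eq <| by rw [card_lt_eq_card_lt_succAbove, hexceed hz, p.2.2]
  have hdisj : Pairwise (Function.onFun (AEDisjoint (Measure.pi fun _ => ν)) E) := by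
    refine fun p p' hp => measure_mono_null (fun z hz => ?_) (ae_iff.1 (ae_pi_injective ν))
    refine fun hinj => hp ?_
    have hindex : p.1 = p'.1 := hinj ((hstat hz.1).symm.trans (hstat hz.2))
    exact Prod.ext hindex <| Subtype.ext <| by rw [← hexceed hz.1, ← hexceed hz.2, hindex]
  refine (HasCondLaw.iUnion hlaw (measurable_Km hK _) hdisj hE).congr_set ?_
  filter_upwards [ae_pi_injective ν] with z hinj
  refine propext ⟨fun hz => ?_, fun hM => ?_⟩
  · obtain ⟨p, hp⟩ := mem_iUnion.1 hz
    exact hp.1.trans_eq (hstat hp).symm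
  · obtain ⟨j, hj⟩ := exists_eq_descStat (x := z) (k := q - 1) (by omega)
    refine mem_iUnion.2 ⟨(j, ⟨({b | z j < z (j.succAbove b)} : Finset _), ?_⟩),
      hM.trans_eq hj.symm, by simp⟩
    rw [← card_lt_eq_card_lt_succAbove, card_lt_eq_of_eq_descStat hinj (by omega) hj]

end ThresholdStability

/-- The survival function `z ↦ P(Z > z)` of the law `ν` of `Z`. -/
def survival (ν : Measure ℝ) (z : ℝ) : ℝ := ν.real (Ioi z)

lemma antitone_survival (ν : Measure ℝ) [IsFiniteMeasure ν] : Antitone (survival ν) :=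
  fun _ _ hst => measureReal_mono (Ioi_subset_Ioi hst)

section GeneralizedPareto

lemma ae_unif01_mem_Ioo : ∀ᵐ u ∂unif01, u ∈ Ioo (0 : ℝ) 1 :=
  ae_restrict_mem measurableSet_Ioo

instance : NullSingletonClass unif01 :=
  inferInstanceAs (NullSingletonClass (volume.restrict _))

lemma unif01_Iio {c : ℝ} (hc : c ≤ 1) : unif01 (Iio c) = ENNReal.ofReal c := by
  have hinter : Iio c ∩ Ioo (0 : ℝ) 1 = Ioo 0 c := by
    ext t
    simp only [mem_inter_iff, mem_Iio, mem_Ioo]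
    grind
  rw [unif01, Measure.restrict_apply measurableSet_Iio, hinter, Real.volume_Ioo, sub_zero]

lemma hasCondLaw_div_unif01 {c : ℝ} (hc : 0 < c) (hc1 : c ≤ 1) :
    HasCondLaw (fun u => u / c) unif01 unif01 (Iio c) := by
  have hinter : Iio c ∩ Ioo (0 : ℝ) 1 = (· / c) ⁻¹' Ioo 0 1 := by
    ext t
    simp only [mem_inter_iff, mem_Iio, mem_Ioo, mem_preimage, div_pos_iff_of_pos_right hc,
      div_lt_one hc]
    grind
  have hscale : (volume : Measure ℝ).map (· / c) = ENNReal.ofReal c • volume := by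
    simp_rw [div_eq_inv_mul, Real.map_volume_mul_left (inv_ne_zero hc.ne'), inv_inv, abs_of_pos hc]
  rw [HasCondLaw, unif01_Iio hc1, unif01, Measure.restrict_restrict measurableSet_Iio, hinter,
    ← Measure.restrict_map (by fun_prop) measurableSet_Ioo, hscale, Measure.restrict_smul]

lemma pareto1_Ici (x : ℝ) : pareto1 (Ici x) = ENNReal.ofReal (max x 1)⁻¹ := by
  have hpos : 0 < max x 1 := by positivity
  have hdensity : (Ici x).indicator (paretoPDF 1 1)
      = (Ici (max x 1)).indicator fun t => ENNReal.ofReal (t ^ (-2 : ℝ)) := by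
    ext t
    by_cases ht : 1 ≤ t
    · by_cases hx : x ≤ t <;> simp [hx, ht, paretoPDF_of_le, one_add_one_eq_two]
    · simp [ht, paretoPDF_of_lt (not_le.1 ht), Set.indicator]
  rw [pareto1, paretoMeasure, withDensity_apply _ measurableSet_Ici,
    ← lintegral_indicator measurableSet_Ici, hdensity, lintegral_indicator measurableSet_Ici,
    setLIntegral_congr Ioi_ae_eq_Ici.symm, ← ofReal_integral_eq_lintegral_ofReal
      (integrableOn_Ioi_rpow_of_lt (by norm_num) hpos)
      (ae_restrict_of_forall_mem measurableSet_Ioi fun t ht => Real.rpow_nonneg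
        (hpos.le.trans ht.le) _), integral_Ioi_rpow_of_lt (by norm_num) hpos]
  norm_num [Real.rpow_neg_one]

lemma pareto1_eq_map_inv : pareto1 = unif01.map fun u => u⁻¹ := by
  refine Measure.ext_of_Ici _ _ fun x => ?_
  have hpos : 0 < max x 1 := by positivity
  have hset : (fun u : ℝ => u⁻¹) ⁻¹' Ici x =ᵐ[unif01] Iio (max x 1)⁻¹ := by
    refine eventuallyEq_set.2 ?_
    filter_upwards [ae_unif01_mem_Ioo, compl_mem_ae_iff.2 (measure_singleton (max x 1)⁻¹)]
      with u hu hne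
    have hone : 1 < u⁻¹ := (one_lt_inv₀ hu.1).2 hu.2
    have hne' : max x 1 ≠ u⁻¹ := fun h => hne (by simp [h])
    rw [mem_preimage, mem_Ici, mem_Iio, lt_inv_comm₀ hu.1 hpos, ← hne'.le_iff_lt]
    simp [hone.le]
  rw [Measure.map_apply measurable_inv measurableSet_Ici, pareto1_Ici, measure_congr hset,
    unif01_Iio (inv_le_one_of_one_le₀ (le_max_right _ _))]

/-- The tail quantile function of `GP(γ)`: a standard uniform variable is mapped to `GP(γ)`, and
small arguments correspond to large values. -/
def gpTailQuantile (γ u : ℝ) : ℝ := hGamma γ u⁻¹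

variable (γ : ℝ) {u v c : ℝ}

lemma measurable_gpTailQuantile : Measurable (gpTailQuantile γ) :=
  (measurable_hGamma γ).comp measurable_inv

lemma gpMeasure_eq_map : gpMeasure γ = unif01.map (gpTailQuantile γ) := by
  rw [gpMeasure, pareto1_eq_map_inv, Measure.map_map (measurable_hGamma γ) measurable_inv]
  rfl

lemma strictAntiOn_gpTailQuantile : StrictAntiOn (gpTailQuantile γ) (Ioi 0) := by
  intro u hu v hv huv
  have hv' : 0 < v⁻¹ := inv_pos.2 hv
  have hinv : v⁻¹ < u⁻¹ := inv_strictAnti₀ hu huv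
  simp only [gpTailQuantile, hGamma]
  split_ifs with h
  · exact Real.log_lt_log hv' hinv
  · rcases lt_or_gt_of_ne h with hγ | hγ
    · rw [div_lt_div_right_of_neg hγ]
      exact sub_lt_sub_right (Real.rpow_lt_rpow_of_neg hv' hinv hγ) 1
    · rw [div_lt_div_iff_of_pos_right hγ]
      exact sub_lt_sub_right (Real.rpow_lt_rpow hv'.le hinv hγ) 1

lemma gpTailQuantile_div (hu : 0 < u) (hc : 0 < c) :
    gpTailQuantile γ (u / c) = (gpTailQuantile γ u - gpTailQuantile γ c) / c⁻¹ ^ γ := by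
  have hpow : 0 < c⁻¹ ^ γ := Real.rpow_pos_of_pos (inv_pos.2 hc) γ
  rw [eq_div_iff hpow.ne', gpTailQuantile, gpTailQuantile, gpTailQuantile]
  unfold hGamma
  split_ifs with h
  · subst h
    rw [inv_div, Real.log_div hc.ne' hu.ne', Real.log_inv, Real.log_inv]
    simp
    ring
  · rw [inv_div, Real.div_rpow hc.le hu.le, Real.inv_rpow hc.le, Real.inv_rpow hu.le]
    have := (Real.rpow_pos_of_pos hc γ).ne'
    field_simp
    ring

instance : NullSingletonClass (gpMeasure γ) where
  measure_singleton z := by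
    rw [gpMeasure_eq_map, Measure.map_apply (measurable_gpTailQuantile γ)
      (measurableSet_singleton z)]
    have hsub : (gpTailQuantile γ ⁻¹' {z} ∩ Ioo 0 1).Subsingleton := fun u hu v hv =>
      (strictAntiOn_gpTailQuantile γ).injOn hu.2.1 hv.2.1 (hu.1.trans hv.1.symm)
    rw [unif01, Measure.restrict_apply
      (measurable_gpTailQuantile γ (measurableSet_singleton z))]
    exact hsub.measure_zero _

lemma hasCondLaw_gpTailQuantile (hc : c ∈ Ioo 0 1) :
    HasCondLaw (fun z => (z - gpTailQuantile γ c) / c⁻¹ ^ γ) (gpMeasure γ) (gpMeasure γ)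
      (Ioi (gpTailQuantile γ c)) := by
  have hmem : ∀ᵐ u ∂unif01, u ∈ Iio c ↔ u ∈ gpTailQuantile γ ⁻¹' Ioi (gpTailQuantile γ c) := by
    filter_upwards [ae_unif01_mem_Ioo] with u hu
    exact ((strictAntiOn_gpTailQuantile γ).lt_iff_gt hc.1 hu.1).symm
  have hscale : gpTailQuantile γ ∘ (fun u => u / c) =ᵐ[unif01]
      (fun z => (z - gpTailQuantile γ c) / c⁻¹ ^ γ) ∘ gpTailQuantile γ := by
    filter_upwards [ae_unif01_mem_Ioo] with u hu
    exact gpTailQuantile_div γ hu.1 hc.1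
  have hunif := (hasCondLaw_div_unif01 hc.1 hc.2.le).comp_left
    (measurable_gpTailQuantile γ) (by fun_prop)
  rw [← gpMeasure_eq_map] at hunif
  have := (hunif.congr_fun (ae_restrict_of_ae hscale)).congr_set (eventuallyEq_set.2 hmem)
  conv => arg 3; rw [gpMeasure_eq_map]
  exact HasCondLaw.of_comp_map (measurable_gpTailQuantile γ) (by fun_prop) measurableSet_Ioi this

lemma survival_gpTailQuantile (hc : c ∈ Ioo 0 1) :
    survival (gpMeasure γ) (gpTailQuantile γ c) = c := by
  have hmem : gpTailQuantile γ ⁻¹' Ioi (gpTailQuantile γ c) =ᵐ[unif01] Iio c := by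
    refine eventuallyEq_set.2 ?_
    filter_upwards [ae_unif01_mem_Ioo] with u hu
    exact (strictAntiOn_gpTailQuantile γ).lt_iff_gt hc.1 hu.1
  rw [survival, gpMeasure_eq_map, measureReal_def, Measure.map_apply
    (measurable_gpTailQuantile γ) measurableSet_Ioi, measure_congr hmem, unif01_Iio hc.2.le,
    ENNReal.toReal_ofReal hc.1.le]

lemma ae_gpTailQuantile_survival : ∀ᵐ z ∂gpMeasure γ,
    survival (gpMeasure γ) z ∈ Ioo 0 1 ∧ gpTailQuantile γ (survival (gpMeasure γ) z) = z := by
  have hS := (antitone_survival (gpMeasure γ)).measurable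
  have hQ := measurable_gpTailQuantile γ
  have hmeas : MeasurableSet
      {z | survival (gpMeasure γ) z ∈ Ioo 0 1 ∧ gpTailQuantile γ (survival (gpMeasure γ) z) = z} :=
    (hS measurableSet_Ioo).inter (measurableSet_eq_fun (hQ.comp hS) measurable_id)
  have hunif : ∀ᵐ u ∂unif01, survival (gpMeasure γ) (gpTailQuantile γ u) ∈ Ioo 0 1 ∧
      gpTailQuantile γ (survival (gpMeasure γ) (gpTailQuantile γ u)) = gpTailQuantile γ u := by
    filter_upwards [ae_unif01_mem_Ioo] with u hu
    simpa only [survival_gpTailQuantile γ hu, and_true] using hu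
  have := (ae_map_iff hQ.aemeasurable hmeas).2 hunif
  rwa [← gpMeasure_eq_map] at this

theorem thresholdStable_gpMeasure : ThresholdStable (gpMeasure γ) := by
  filter_upwards [ae_gpTailQuantile_survival γ] with t ⟨hmem, ht⟩
  have := hasCondLaw_gpTailQuantile γ hmem
  rw [ht] at this
  exact ⟨_, Real.rpow_pos_of_pos (inv_pos.2 hmem.1) γ, this⟩

lemma map_survival_gpMeasure : (gpMeasure γ).map (survival (gpMeasure γ)) = unif01 := by
  have hid : survival (gpMeasure γ) ∘ gpTailQuantile γ =ᵐ[unif01] id := by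
    filter_upwards [ae_unif01_mem_Ioo] with u hu
    exact survival_gpTailQuantile γ hu
  have := Measure.map_map (μ := unif01) (antitone_survival (gpMeasure γ)).measurable
    (measurable_gpTailQuantile γ)
  rwa [← gpMeasure_eq_map, Measure.map_congr hid, Measure.map_id] at this

end GeneralizedPareto

section Blocks

variable {Ω : Type*} {Z : ℕ → Ω → ℝ} {ω : Ω} {s q n ℓ : ℕ}

/-- The consecutive subsample `(Z_{s+1}, …, Z_{s+n})`. -/
def block (Z : ℕ → Ω → ℝ) (s n : ℕ) (ω : Ω) : Fin n → ℝ := fun i => Z (s + 1 + i) ω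

lemma Icc_eq_image_fin (s n : ℕ) :
    Finset.Icc (s + 1) (s + n) = Finset.univ.image fun i : Fin n => s + 1 + (i : ℕ) := by
  ext a
  simp only [Finset.mem_Icc, Finset.mem_image, Finset.mem_univ, true_and]
  exact ⟨fun h => ⟨⟨a - (s + 1), by omega⟩, by simp only; omega⟩, by rintro ⟨i, rfl⟩; omega⟩

lemma card_filter_Icc_eq_card_block (t : ℝ) :
    #{a ∈ Finset.Icc (s + 1) (s + n) | t < Z a ω} = #{i | t < block Z s n ω i} := by
  have hinj : Function.Injective fun i : Fin n => s + 1 + (i : ℕ) := fun i j h =>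
    Fin.ext (Nat.add_left_cancel h)
  rw [Icc_eq_image_fin, Finset.filter_image, Finset.card_image_of_injective _ hinj]
  rfl

lemma KmOn_eq_Km_block {K : (Fin q → ℝ) → ℝ} {S : Finset ℕ} (hq : q ≤ n)
    (hsub : Finset.Icc (s + 1) (s + n) ⊆ S)
    (hout : ∀ a ∈ S \ Finset.Icc (s + 1) (s + n), q ≤ #{i | Z a ω < block Z s n ω i}) :
    KmOn K Z S ω = Km K n (block Z s n ω) := by
  have hmem (i : Fin n) : s + 1 + (i : ℕ) ∈ S := hsub (by rw [Finset.mem_Icc]; omega)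
  let f (i : Fin n) : Fin S.card := (S.orderIsoOfFin rfl).symm ⟨s + 1 + i, hmem i⟩
  have hf : f.Injective := fun i j h =>
    Fin.ext (Nat.add_left_cancel (Subtype.ext_iff.1 ((S.orderIsoOfFin rfl).symm.injective h)))
  have hval (i) : (S.orderIsoOfFin rfl (f i) : ℕ) = s + 1 + i := by simp [f]
  rw [KmOn, ← Km_congr_of_injective hf hq fun b hb => ?_]
  · simp only [Function.comp_def, hval]
    rfl
  · refine (hout (S.orderIsoOfFin rfl b) ?_).trans (Finset.card_le_card ?_)
    · refine Finset.mem_sdiff.2 ⟨Subtype.coe_prop _, fun hb' => hb ?_⟩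
      rw [Icc_eq_image_fin, Finset.mem_image] at hb'
      obtain ⟨i, -, hi⟩ := hb'
      exact ⟨i, (S.orderIsoOfFin rfl).injective (Subtype.ext ((hval i).trans hi))⟩
    · simp only [hval]
      exact Finset.monotone_filter_right _ fun i _ h => h.le

lemma forall_not_inTopQ_union_iff {A B : Finset ℕ} :
    (∀ i ∈ B, ¬ inTopQ q Z (A ∪ B) i ω) ↔ ∀ i ∈ B, q ≤ #{a ∈ A | Z i ω < Z a ω} := by
  simp only [inTopQ, not_lt]
  refine ⟨fun h i hi => ?_, fun h i hi => (h i hi).trans ?_⟩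
  · obtain ⟨b, hb, hmax⟩ := Finset.exists_max_image B (Z · ω) ⟨i, hi⟩
    refine (h b hb).trans (Finset.card_le_card fun a ha => ?_)
    simp only [Finset.mem_filter, Finset.mem_union] at ha ⊢
    rcases ha with ⟨ha | ha, hlt⟩
    · exact ⟨ha, (hmax i hi).trans_lt hlt⟩
    · exact absurd hlt (hmax a ha).not_gt
  · exact Finset.card_le_card (Finset.filter_subset_filter _ Finset.subset_union_left)

lemma lt_descStat_pred_iff {x : Fin n → ℝ} {t : ℝ} (hq : 1 ≤ q) (hqn : q ≤ n) :
    t < descStat x (q - 1) ↔ q ≤ #{i | t < x i} := by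
  rw [lt_descStat_iff (by omega)]
  omega

lemma ciSup_lt_descStat_iff {y : Fin ℓ → ℝ} {x : Fin n → ℝ} (hq : 1 ≤ q) (hqn : q ≤ n)
    (hℓ : 1 ≤ ℓ) : (⨆ b, y b) < descStat x (q - 1) ↔ ∀ b, q ≤ #{i | y b < x i} := by
  have : Nonempty (Fin ℓ) := ⟨⟨0, hℓ⟩⟩
  simp only [← lt_descStat_pred_iff hq hqn]
  refine ⟨fun h b => (le_ciSup (finite_range y).bddAbove b).trans_lt h, fun h => ?_⟩
  obtain ⟨b, hb⟩ := exists_eq_ciSup_of_finite (f := y)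
  exact hb ▸ h b

/-- With `m = n + ℓ`, the windows `[1:m]` and `[(m-ℓ+1):(2m-ℓ)]` consist of the common block
`[n+1:n+ℓ]` and of two outer blocks of length `n`; the triple lists the common block first. -/
def blocks (Z : ℕ → Ω → ℝ) (ℓ n : ℕ) (ω : Ω) : (Fin ℓ → ℝ) × (Fin n → ℝ) × (Fin n → ℝ) :=
  (block Z n ℓ ω, block Z 0 n ω, block Z (n + ℓ) n ω)

/-- The event that at least `q` entries of each outer block exceed all entries of the common block,
for a triple `p` as in `blocks`. -/
def dominatedOverlap (q ℓ n : ℕ) : Set ((Fin ℓ → ℝ) × (Fin n → ℝ) × (Fin n → ℝ)) :=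
  {p | (⨆ b, p.1 b) < descStat p.2.1 (q - 1) ∧ (⨆ b, p.1 b) < descStat p.2.2 (q - 1)}

lemma Ncount_eq_zero_iff_forall_le_card : Ncount q Z ℓ (n + ℓ) ω = 0 ↔
    (∀ i ∈ Finset.Icc (n + 1) (n + ℓ), q ≤ #{j | Z i ω < block Z 0 n ω j}) ∧
      ∀ i ∈ Finset.Icc (n + 1) (n + ℓ), q ≤ #{j | Z i ω < block Z (n + ℓ) n ω j} := by
  have hleft : Finset.Icc 1 (n + ℓ) = Finset.Icc (0 + 1) (0 + n) ∪ Finset.Icc (n + 1) (n + ℓ) := by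
    ext a
    simp only [Finset.mem_union, Finset.mem_Icc]
    omega
  have hright : Finset.Icc (n + 1) (2 * (n + ℓ) - ℓ)
      = Finset.Icc (n + ℓ + 1) (n + ℓ + n) ∪ Finset.Icc (n + 1) (n + ℓ) := by
    ext a
    simp only [Finset.mem_union, Finset.mem_Icc]
    omega
  rw [Ncount, Nat.add_sub_cancel, Finset.card_eq_zero, Finset.filter_eq_empty_iff, hleft, hright]
  simp only [not_or, forall_and, forall_not_inTopQ_union_iff, card_filter_Icc_eq_card_block]

lemma Ncount_eq_zero_iff_blocks_mem (hq : 1 ≤ q) (hqn : q ≤ n) (hℓ : 1 ≤ ℓ) :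
    Ncount q Z ℓ (n + ℓ) ω = 0 ↔ blocks Z ℓ n ω ∈ dominatedOverlap q ℓ n := by
  rw [Ncount_eq_zero_iff_forall_le_card]
  simp only [dominatedOverlap, mem_ofPred_eq, ciSup_lt_descStat_iff hq hqn hℓ, blocks,
    Icc_eq_image_fin, Finset.forall_mem_image, Finset.mem_univ, true_imp_iff]
  rfl

lemma XiRV_eq_mul_of_Ncount_eq_zero {K : (Fin q → ℝ) → ℝ} (hqn : q ≤ n)
    (hN : Ncount q Z ℓ (n + ℓ) ω = 0) :
    XiRV K Z ℓ (n + ℓ) ω = Km K n (block Z 0 n ω) * Km K n (block Z (n + ℓ) n ω) := by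
  obtain ⟨hleft, hright⟩ := Ncount_eq_zero_iff_forall_le_card.1 hN
  rw [XiRV, KmOn_eq_Km_block (s := 0) hqn, KmOn_eq_Km_block (s := n + ℓ) hqn]
  · exact Finset.Icc_subset_Icc (by omega) (by omega)
  · refine fun i hi => hright i ?_
    simp only [Finset.mem_sdiff, Finset.mem_Icc] at hi ⊢
    omega
  · exact Finset.Icc_subset_Icc (by omega) (by omega)
  · refine fun i hi => hleft i ?_
    simp only [Finset.mem_sdiff, Finset.mem_Icc] at hi ⊢
    omega

end Blocks

section BlockLaws

variable {Ω : Type*} [MeasurableSpace Ω] {P : Measure Ω} [IsProbabilityMeasure P]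
  {ν : Measure ℝ} [IsProbabilityMeasure ν] {Z : ℕ → Ω → ℝ} {q : ℕ} {K : (Fin q → ℝ) → ℝ}

lemma measurePreserving_blocks (hZ : ∀ i, Measurable (Z i)) (hindep : iIndepFun Z P)
    (hlaw : ∀ i, P.map (Z i) = ν) (ℓ n : ℕ) :
    MeasurePreserving (blocks Z ℓ n) P ((Measure.pi fun _ => ν).prod
      ((Measure.pi fun _ => ν).prod (Measure.pi fun _ => ν))) := by
  let index : Fin ℓ ⊕ (Fin n ⊕ Fin n) → ℕ :=
    Sum.elim (fun b => n + 1 + b) (Sum.elim (fun a => 0 + 1 + a) fun c => n + ℓ + 1 + c)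
  have hindex : index.Injective := by
    rintro (a | a | a) (b | b | b) h <;> grind
  have hsample : MeasurePreserving (fun ω i => Z (index i) ω) P (Measure.pi fun _ => ν) := by
    refine ⟨measurable_pi_lambda _ fun i => hZ _, ?_⟩
    rw [(iIndepFun_iff_map_fun_eq_pi_map fun i => (hZ (index i)).aemeasurable).1
      (hindep.precomp hindex)]
    simp_rw [hlaw]
  have houter := measurePreserving_sumPiEquivProdPi (X := fun _ : Fin n ⊕ Fin n => ℝ) fun _ => ν
  have hall := measurePreserving_sumPiEquivProdPi (X := fun _ : Fin ℓ ⊕ (Fin n ⊕ Fin n) => ℝ)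
    fun _ => ν
  exact (((MeasurePreserving.id _).prod houter).comp hall).comp hsample

lemma measurableSet_dominatedOverlap (q ℓ n : ℕ) : MeasurableSet (dominatedOverlap q ℓ n) := by
  have hsup : Measurable fun p : (Fin ℓ → ℝ) × (Fin n → ℝ) × (Fin n → ℝ) => ⨆ b, p.1 b :=
    Measurable.iSup fun b => by fun_prop
  exact (measurableSet_lt hsup ((measurable_descStat _).comp measurable_snd.fst)).inter
    (measurableSet_lt hsup ((measurable_descStat _).comp measurable_snd.snd))

lemma isProbabilityMeasure_kernelLaw (hK : Measurable K) : IsProbabilityMeasure (kernelLaw ν K) :=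
  Measure.isProbabilityMeasure_map (hK.comp measurable_refVec).aemeasurable

lemma hasCondLaw_prodMap_Km_dominatedOverlap [NullSingletonClass ν] (hν : ThresholdStable ν)
    (hK : Measurable K) (hLS : LocScaleInvariant K) (hq : 1 ≤ q) {n : ℕ} (hqn : q ≤ n) (ℓ : ℕ) :
    HasCondLaw (fun p => (Km K n p.2.1, Km K n p.2.2)) ((kernelLaw ν K).prod (kernelLaw ν K))
      ((Measure.pi fun _ => ν).prod ((Measure.pi fun _ => ν).prod (Measure.pi fun _ => ν)))
      (dominatedOverlap q ℓ n) := by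
  have hKm := measurable_Km hK n
  have := isProbabilityMeasure_kernelLaw (ν := ν) hK
  refine HasCondLaw.of_ae_fiber (.of_forall fun y => ?_) (by fun_prop)
    (measurableSet_dominatedOverlap q ℓ n)
  have hblock := hasCondLaw_Km_lt_descStat hν hK hLS hq hqn (⨆ b, y b)
  exact hblock.prodMap hblock hKm hKm

theorem setIntegral_XiRV_Ncount_eq_zero [NullSingletonClass ν] (hν : ThresholdStable ν)
    (hK : Measurable K) (hLS : LocScaleInvariant K) (hint : Integrable id (kernelLaw ν K))
    (hq : 1 ≤ q) {ℓ n : ℕ} (hℓ : 1 ≤ ℓ) (hqn : q ≤ n) (hZ : ∀ i, Measurable (Z i))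
    (hindep : iIndepFun Z P) (hlaw : ∀ i, P.map (Z i) = ν) :
    IntegrableOn (XiRV K Z ℓ (n + ℓ)) {ω | Ncount q Z ℓ (n + ℓ) ω = 0} P ∧
      ∫ ω in {ω | Ncount q Z ℓ (n + ℓ) ω = 0}, XiRV K Z ℓ (n + ℓ) ω ∂P
        = P.real {ω | Ncount q Z ℓ (n + ℓ) ω = 0} * (∫ x, x ∂kernelLaw ν K) ^ 2 := by
  have hevent : {ω | Ncount q Z ℓ (n + ℓ) ω = 0} = blocks Z ℓ n ⁻¹' dominatedOverlap q ℓ n :=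
    Set.ext fun ω => Ncount_eq_zero_iff_blocks_mem hq hqn hℓ
  have hN := measurableSet_dominatedOverlap q ℓ n
  have hblocks := measurePreserving_blocks hZ hindep hlaw ℓ n
  have hE := hN.preimage hblocks.measurable
  have hKm := measurable_Km hK n
  have hpair : Measurable fun p : (Fin ℓ → ℝ) × (Fin n → ℝ) × (Fin n → ℝ) =>
    (Km K n p.2.1, Km K n p.2.2) := by fun_prop
  have hlawE := (hasCondLaw_prodMap_Km_dominatedOverlap hν hK hLS hq hqn ℓ).comp_measurePreserving
    hblocks hpair hN
  have hXi : EqOn (fun ω => Km K n (block Z 0 n ω) * Km K n (block Z (n + ℓ) n ω))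
      (XiRV K Z ℓ (n + ℓ)) (blocks Z ℓ n ⁻¹' dominatedOverlap q ℓ n) := fun ω hω =>
    (XiRV_eq_mul_of_Ncount_eq_zero hqn ((Ncount_eq_zero_iff_blocks_mem hq hqn hℓ).2 hω)).symm
  have := isProbabilityMeasure_kernelLaw (ν := ν) hK
  rw [hevent, ← setIntegral_congr_fun hE hXi]
  refine ⟨IntegrableOn.congr_fun ?_ hXi hE, ?_⟩
  · exact hlawE.integrableOn_comp (hpair.comp hblocks.measurable) (hint.mul_prod hint)
  · refine (hlawE.setIntegral_comp (g := fun x => x.1 * x.2) (hpair.comp hblocks.measurable)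
      (by fun_prop)).trans ?_
    rw [integral_prod_mul (fun x => x) fun x => x, sq]

end BlockLaws

section BinomialTail

open Polynomial

variable {n q : ℕ} {u : ℝ}

/-- The probability, as a polynomial in `u`, that a Binomial(`n`, `u`) variable is less than `q`. -/
def binomLower (n q : ℕ) : ℝ[X] := ∑ j ∈ Finset.range q, bernsteinPolynomial ℝ n j

lemma binomLower_succ (n q : ℕ) :
    binomLower n (q + 1) = binomLower n q + bernsteinPolynomial ℝ n q :=
  Finset.sum_range_succ _ _

lemma bernsteinPolynomial_succ_zero (n : ℕ) :
    bernsteinPolynomial ℝ (n + 1) 0 = (1 - X) * bernsteinPolynomial ℝ n 0 := by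
  simp [bernsteinPolynomial, pow_succ']

lemma bernsteinPolynomial_succ_succ (n j : ℕ) :
    bernsteinPolynomial ℝ (n + 1) (j + 1) =
      (1 - X) * bernsteinPolynomial ℝ n (j + 1) + X * bernsteinPolynomial ℝ n j := by
  simp only [bernsteinPolynomial, Nat.choose_succ_succ, Nat.add_sub_add_right]
  rcases le_or_gt (j + 1) n with h | h
  · obtain ⟨d, rfl⟩ := Nat.exists_eq_add_of_le h
    rw [show j + 1 + d - j = d + 1 by omega, Nat.add_sub_cancel_left]
    push_cast
    ring
  · rw [Nat.choose_eq_zero_of_lt h]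
    push_cast
    ring

lemma binomLower_succ_succ (n q : ℕ) :
    binomLower (n + 1) (q + 1) = (1 - X) * binomLower n (q + 1) + X * binomLower n q := by
  simp only [binomLower, Finset.sum_range_succ' _ q, bernsteinPolynomial_succ_succ,
    bernsteinPolynomial_succ_zero, Finset.sum_add_distrib, ← Finset.mul_sum]
  ring

lemma derivative_binomLower_succ_succ (n q : ℕ) :
    derivative (binomLower (n + 1) (q + 1)) = -((n + 1) * bernsteinPolynomial ℝ n q) := by
  induction q with
  | zero =>
    rw [binomLower, zero_add, Finset.sum_range_one, bernsteinPolynomial.derivative_zero,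
      Nat.add_sub_cancel]
    push_cast
    ring
  | succ q ih =>
    rw [binomLower_succ, derivative_add, ih, bernsteinPolynomial.derivative_succ_aux]
    ring

lemma X_mul_bernsteinPolynomial (n j : ℕ) :
    X * bernsteinPolynomial ℝ n j =
      C ((j + 1) / (n + 1) : ℝ) * bernsteinPolynomial ℝ (n + 1) (j + 1) := by
  have hchoose : ((n.choose j : ℕ) : ℝ) = (j + 1) / (n + 1) * (n + 1).choose (j + 1) := by
    rw [div_mul_eq_mul_div, eq_div_iff (by positivity)]
    exact_mod_cast (by linarith [Nat.add_one_mul_choose_eq n j] :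
      n.choose j * (n + 1) = (j + 1) * (n + 1).choose (j + 1))
  simp only [bernsteinPolynomial, ← C_eq_natCast, hchoose, C_mul, Nat.add_sub_add_right]
  ring

lemma eval_bernsteinPolynomial_nonneg (hu : u ∈ Icc 0 1) (n j : ℕ) :
    0 ≤ (bernsteinPolynomial ℝ n j).eval u := by
  have := hu.1
  have := sub_nonneg.2 hu.2
  simp only [bernsteinPolynomial, eval_mul, eval_pow, eval_sub, eval_one, eval_X, eval_natCast]
  positivity

lemma eval_binomLower (n q : ℕ) (u : ℝ) :
    (binomLower n q).eval u = ∑ j ∈ Finset.range q, (bernsteinPolynomial ℝ n j).eval u :=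
  eval_finsetSum _ _ _

lemma eval_binomLower_nonneg (hu : u ∈ Icc 0 1) (n q : ℕ) : 0 ≤ (binomLower n q).eval u := by
  rw [eval_binomLower]
  exact Finset.sum_nonneg fun j _ => eval_bernsteinPolynomial_nonneg hu n j

lemma eval_binomLower_le_one (hu : u ∈ Icc 0 1) (n q : ℕ) : (binomLower n q).eval u ≤ 1 := by
  have htotal : (binomLower n (n + 1)).eval u = 1 := by
    rw [binomLower, bernsteinPolynomial.sum, eval_one]
  rw [← htotal, eval_binomLower, eval_binomLower]
  rcases le_total q (n + 1) with hq | hq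
  · exact Finset.sum_le_sum_of_subset_of_nonneg (Finset.range_mono hq) fun j _ _ =>
      eval_bernsteinPolynomial_nonneg hu n j
  · refine (Finset.sum_subset (Finset.range_mono hq) fun j _ hj => ?_).ge
    rw [bernsteinPolynomial.eq_zero_of_lt ℝ (by simpa using hj), eval_zero]

lemma eval_bernsteinPolynomial_le_one (hu : u ∈ Icc 0 1) (n j : ℕ) :
    (bernsteinPolynomial ℝ n j).eval u ≤ 1 := by
  have := eval_binomLower_le_one hu n (j + 1)
  rw [binomLower_succ, eval_add] at this
  linarith [eval_binomLower_nonneg hu n j]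

lemma integral_bernsteinPolynomial_le (n q : ℕ) :
    ∫ u in (0 : ℝ)..1, (bernsteinPolynomial ℝ n q).eval u ≤ 1 / (n + 1) := by
  have hn : (0 : ℝ) < n + 1 := by positivity
  have hderiv (u : ℝ) : HasDerivAt (fun u => -(binomLower (n + 1) (q + 1)).eval u)
      ((n + 1) * (bernsteinPolynomial ℝ n q).eval u) u := by
    have h := ((binomLower (n + 1) (q + 1)).hasDerivAt u).neg
    rwa [derivative_binomLower_succ_succ, eval_neg, neg_neg, eval_mul, eval_add, eval_one,
      eval_natCast] at h
  have hftc := intervalIntegral.integral_eq_sub_of_hasDerivAt (fun u _ => hderiv u)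
    (Continuous.intervalIntegrable (by fun_prop) 0 1)
  rw [intervalIntegral.integral_const_mul] at hftc
  rw [le_div_iff₀' hn, hftc]
  linarith [eval_binomLower_le_one (u := 0) (by simp) (n + 1) (q + 1),
    eval_binomLower_nonneg (u := 1) (by simp) (n + 1) (q + 1)]

lemma integral_mul_bernsteinPolynomial_le (n j : ℕ) :
    ∫ u in (0 : ℝ)..1, u * (bernsteinPolynomial ℝ n j).eval u ≤ (j + 1) / ((n + 1) * (n + 2)) := by
  have heval (u : ℝ) : u * (bernsteinPolynomial ℝ n j).eval u =
      (j + 1) / (n + 1) * (bernsteinPolynomial ℝ (n + 1) (j + 1)).eval u := by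
    simpa using congrArg (eval u) (X_mul_bernsteinPolynomial n j)
  simp_rw [heval, intervalIntegral.integral_const_mul]
  calc (j + 1 : ℝ) / (n + 1) * ∫ u in (0 : ℝ)..1, (bernsteinPolynomial ℝ (n + 1) (j + 1)).eval u
      ≤ (j + 1) / (n + 1) * (1 / ((n + 1 : ℕ) + 1)) := by
        gcongr
        exact integral_bernsteinPolynomial_le _ _
    _ = (j + 1) / ((n + 1) * (n + 2)) := by
        push_cast
        field_simp
        ring

lemma integral_mul_binomLower_le (n q : ℕ) :
    ∫ u in (0 : ℝ)..1, u * (binomLower n q).eval u ≤ q * (q + 1) / (2 * ((n + 1) * (n + 2))) := by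
  induction q with
  | zero => simp [binomLower]
  | succ q ih =>
    simp_rw [binomLower_succ, eval_add, mul_add]
    rw [intervalIntegral.integral_add (Continuous.intervalIntegrable (by fun_prop) _ _)
      (Continuous.intervalIntegrable (by fun_prop) _ _)]
    refine (add_le_add ih (integral_mul_bernsteinPolynomial_le n q)).trans_eq ?_
    push_cast
    field_simp
    ring

end BinomialTail

section OverlapIntegral

open Polynomial

/-- For independent uniform variables with minimum `U` over a block of size `k + 1`, the integral
is `P(N ≠ 0) / (k + 1)`, where `N = 0` says that each of two further blocks of size `n` has at
least `q` members below `U`. -/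
def overlapIntegral (q k n : ℕ) : ℝ :=
  ∫ u in (0 : ℝ)..1, (1 - u) ^ k * (1 - (1 - (binomLower n q).eval u) ^ 2)

/-- By Pascal's rule `binomLower (n + 1) (q + 1)` averages `binomLower n (q + 1)` and
`binomLower n q` with weights `1 - u` and `u`; hence the factor `u`, which gains an order in `n`. -/
lemma overlapIntegral_succ_sub_overlapIntegral_succ (q k n : ℕ) :
    overlapIntegral (q + 1) k (n + 1) - overlapIntegral (q + 1) (k + 1) n =
      ∫ u in (0 : ℝ)..1, (1 - u) ^ k * (u * ((1 - (1 - (binomLower n q).eval u) ^ 2) +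
        (1 - u) * (bernsteinPolynomial ℝ n q).eval u ^ 2)) := by
  rw [overlapIntegral, overlapIntegral, ← intervalIntegral.integral_sub]
  · refine intervalIntegral.integral_congr fun u _ => ?_
    simp only [binomLower_succ_succ, binomLower_succ, eval_add, eval_mul, eval_sub, eval_one,
      eval_X]
    ring
  all_goals exact Continuous.intervalIntegrable (by fun_prop) _ _

lemma overlapIntegral_sub_mem_Icc_of_succ (q k n : ℕ) :
    overlapIntegral (q + 1) k (n + 1) - overlapIntegral (q + 1) (k + 1) n ∈
      Icc 0 (((q : ℝ) + 1) ^ 2 / ((n + 1) * (n + 2))) := by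
  rw [overlapIntegral_succ_sub_overlapIntegral_succ]
  let a (u : ℝ) : ℝ := (binomLower n q).eval u
  let b (u : ℝ) : ℝ := (bernsteinPolynomial ℝ n q).eval u
  have hbounds {u : ℝ} (hu : u ∈ Icc (0 : ℝ) 1) :
      0 ≤ (1 - (1 - a u) ^ 2) + (1 - u) * b u ^ 2 ∧
        (1 - (1 - a u) ^ 2) + (1 - u) * b u ^ 2 ≤ 2 * a u + b u := by
    have ha0 : 0 ≤ a u := eval_binomLower_nonneg hu n q
    have ha1 : a u ≤ 1 := eval_binomLower_le_one hu n q
    have hb0 : 0 ≤ b u := eval_bernsteinPolynomial_nonneg hu n q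
    have hb1 : b u ≤ 1 := eval_bernsteinPolynomial_le_one hu n q
    have hu0 : 0 ≤ 1 - u := sub_nonneg.2 hu.2
    have hub : (1 - u) * b u ^ 2 ≤ b u := by nlinarith [hu.1]
    exact ⟨by nlinarith [mul_nonneg hu0 (sq_nonneg (b u))], by nlinarith⟩
  have hpow {u : ℝ} (hu : u ∈ Icc (0 : ℝ) 1) : 0 ≤ (1 - u) ^ k :=
    pow_nonneg (sub_nonneg.2 hu.2) k
  refine ⟨intervalIntegral.integral_nonneg zero_le_one fun u hu =>
    mul_nonneg (hpow hu) (mul_nonneg hu.1 (hbounds hu).1), ?_⟩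
  calc
    _ ≤ ∫ u in (0 : ℝ)..1, (2 * (u * a u) + u * b u) := by
        refine intervalIntegral.integral_mono_on zero_le_one
          (Continuous.intervalIntegrable (by fun_prop) _ _)
          (Continuous.intervalIntegrable (by fun_prop) _ _) fun u hu => ?_
        have hle := mul_le_mul_of_nonneg_left (hbounds hu).2 hu.1
        refine (mul_le_of_le_one_left (mul_nonneg hu.1 (hbounds hu).1)
          (pow_le_one₀ (sub_nonneg.2 hu.2) (by linarith [hu.1]))).trans (hle.trans_eq (by ring))
    _ = 2 * (∫ u in (0 : ℝ)..1, u * a u) + ∫ u in (0 : ℝ)..1, u * b u := by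
        rw [intervalIntegral.integral_add (Continuous.intervalIntegrable (by fun_prop) _ _)
          (Continuous.intervalIntegrable (by fun_prop) _ _), intervalIntegral.integral_const_mul]
    _ ≤ 2 * (q * (q + 1) / (2 * ((n + 1) * (n + 2)))) + (q + 1) / ((n + 1) * (n + 2)) := by
        gcongr
        · exact integral_mul_binomLower_le n q
        · exact integral_mul_bernsteinPolynomial_le n q
    _ = ((q : ℝ) + 1) ^ 2 / ((n + 1) * (n + 2)) := by field_simp

lemma overlapIntegral_zero_sub_mem_Icc {q : ℕ} (hq : 1 ≤ q) (k n : ℕ) :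
    overlapIntegral q 0 (n + k) - overlapIntegral q k n ∈
      Icc 0 ((q : ℝ) ^ 2 * k / ((n + k + 1) * (n + 1))) := by
  obtain ⟨r, rfl⟩ := Nat.exists_eq_add_of_le' hq
  induction k generalizing n with
  | zero => simp
  | succ k ih =>
    have htail := ih (n + 1)
    have hstep := overlapIntegral_sub_mem_Icc_of_succ r k n
    rw [show n + (k + 1) = n + 1 + k by omega, ← sub_add_sub_cancel _ (overlapIntegral _ k (n + 1))]
    refine ⟨add_nonneg htail.1 hstep.1, (add_le_add htail.2 hstep.2).trans_eq ?_⟩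
    push_cast
    field_simp
    ring

end OverlapIntegral

section MinimumLaw

lemma restrict_unif01_Ici (x : ℝ) :
    unif01.restrict (Ici x) = volume.restrict (Ioc (max 0 x) 1) := by
  rw [unif01, Measure.restrict_restrict measurableSet_Ici, inter_comm, ← Ioc_inter_Ioi]
  exact Measure.restrict_congr_set (Ioo_ae_eq_Ioc.inter Ioi_ae_eq_Ici.symm)

lemma unif01_Ici (x : ℝ) : unif01 (Ici x) = ENNReal.ofReal (1 - max 0 x) := by
  rw [← Measure.restrict_apply_univ, restrict_unif01_Ici, Measure.restrict_apply_univ,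
    Real.volume_Ioc]

lemma setLIntegral_Ioc_mul_one_sub_pow (k : ℕ) (y : ℝ) :
    ∫⁻ t in Ioc y 1, ENNReal.ofReal ((k + 1) * (1 - t) ^ k) = ENNReal.ofReal (1 - y) ^ (k + 1) := by
  rcases le_or_gt 1 y with hy | hy
  · simp [Ioc_eq_empty_of_le hy, ENNReal.ofReal_of_nonpos (sub_nonpos.2 hy)]
  have hcont : Continuous fun t : ℝ => (k + 1) * (1 - t) ^ k := by fun_prop
  have hderiv (t : ℝ) : HasDerivAt (fun t => -(1 - t) ^ (k + 1)) ((k + 1) * (1 - t) ^ k) t := by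
    refine (((hasDerivAt_id' t).const_sub 1).fun_pow (k + 1)).fun_neg.congr_deriv ?_
    push_cast
    simp
  rw [← ofReal_integral_eq_lintegral_ofReal hcont.integrableOn_Ioc,
    ← intervalIntegral.integral_of_le hy.le, ← ENNReal.ofReal_pow (sub_nonneg.2 hy.le),
    intervalIntegral.integral_eq_sub_of_hasDerivAt (fun t _ => hderiv t)
      (hcont.intervalIntegrable _ _)]
  · simp
  · filter_upwards [ae_restrict_mem measurableSet_Ioc] with t ht
    have := sub_nonneg.2 ht.2
    positivity

lemma pi_unif01_map_ciInf (k : ℕ) :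
    (Measure.pi fun _ : Fin (k + 1) => unif01).map (fun u => ⨅ i, u i) =
      unif01.withDensity fun t => ENNReal.ofReal ((k + 1) * (1 - t) ^ k) := by
  have hmin : Measurable fun u : Fin (k + 1) → ℝ => ⨅ i, u i := Measurable.iInf measurable_pi_apply
  have := Measure.isProbabilityMeasure_map (μ := Measure.pi fun _ : Fin (k + 1) => unif01)
    hmin.aemeasurable
  refine Measure.ext_of_Ici _ _ fun x => ?_
  have hbox : (fun u : Fin (k + 1) → ℝ => ⨅ i, u i) ⁻¹' Ici x = univ.pi fun _ => Ici x := by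
    ext u
    simp only [mem_preimage, mem_Ici, mem_univ_pi]
    exact le_ciInf_iff (finite_range u).bddBelow
  rw [Measure.map_apply hmin measurableSet_Ici, withDensity_apply _ measurableSet_Ici, hbox,
    Measure.pi_pi, restrict_unif01_Ici, setLIntegral_Ioc_mul_one_sub_pow, Finset.prod_const,
    Finset.card_univ, Fintype.card_fin, unif01_Ici]

lemma integral_ciInf_pi_unif01 (k : ℕ) {g : ℝ → ℝ} (hg : Measurable g) :
    ∫ u, g (⨅ i, u i) ∂(Measure.pi fun _ : Fin (k + 1) => unif01) =
      (k + 1) * ∫ t in (0 : ℝ)..1, (1 - t) ^ k * g t := by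
  rw [← integral_map (φ := fun u : Fin (k + 1) → ℝ => ⨅ i, u i)
    (Measurable.iInf measurable_pi_apply).aemeasurable hg.aestronglyMeasurable,
    pi_unif01_map_ciInf, integral_withDensity_eq_integral_toReal_smul (by fun_prop) (by simp),
    ← intervalIntegral.integral_const_mul, intervalIntegral.integral_of_le zero_le_one, unif01,
    restrict_Ioo_eq_restrict_Ioc]
  refine setIntegral_congr_fun measurableSet_Ioc fun t ht => ?_
  have := sub_nonneg.2 ht.2
  rw [ENNReal.toReal_ofReal (by positivity), smul_eq_mul, mul_assoc]

lemma survival_ciSup {ν : Measure ℝ} [IsFiniteMeasure ν] {ι : Type*} [Finite ι] [Nonempty ι]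
    (y : ι → ℝ) : survival ν (⨆ i, y i) = ⨅ i, survival ν (y i) := by
  obtain ⟨i, hi⟩ := exists_eq_ciSup_of_finite (f := y)
  refine le_antisymm (le_ciInf fun j => antitone_survival ν ?_) ?_
  · exact le_ciSup (finite_range y).bddAbove j
  · exact hi ▸ ciInf_le (finite_range fun j => survival ν (y j)).bddBelow i

lemma integral_survival_ciSup {ν : Measure ℝ} [IsProbabilityMeasure ν]
    (hν : ν.map (survival ν) = unif01) (k : ℕ) {g : ℝ → ℝ} (hg : Measurable g) :
    ∫ y, g (survival ν (⨆ b, y b)) ∂(Measure.pi fun _ : Fin (k + 1) => ν) =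
      (k + 1) * ∫ t in (0 : ℝ)..1, (1 - t) ^ k * g t := by
  have hS : Measurable (survival ν) := (antitone_survival ν).measurable
  have hmap : (Measure.pi fun _ : Fin (k + 1) => ν).map (fun y b => survival ν (y b)) =
      Measure.pi fun _ => unif01 := by
    rw [Measure.pi_map_pi fun _ => hS.aemeasurable, hν]
  have hmin : Measurable fun u : Fin (k + 1) → ℝ => g (⨅ i, u i) :=
    hg.comp (Measurable.iInf measurable_pi_apply)
  simp_rw [survival_ciSup]
  rw [← integral_ciInf_pi_unif01 k hg, ← hmap, integral_map
    (by fun_prop : Measurable fun (y : Fin (k + 1) → ℝ) b => survival ν (y b)).aemeasurable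
    hmin.aestronglyMeasurable]

end MinimumLaw

section OverlapProbability

variable {ν : Measure ℝ} [IsProbabilityMeasure ν]

lemma pi_real_card_mem_eq (n j : ℕ) {s : Set ℝ} [DecidablePred (· ∈ s)] (hs : MeasurableSet s) :
    (Measure.pi fun _ : Fin n => ν).real {x | #{i | x i ∈ s} = j} =
      (bernsteinPolynomial ℝ n j).eval (ν.real s) := by
  let box (I : Finset (Fin n)) : Set (Fin n → ℝ) := univ.pi fun i => if i ∈ I then s else sᶜ
  have hmem {x : Fin n → ℝ} {I : Finset (Fin n)} : x ∈ box I ↔ ({i | x i ∈ s} : Finset _) = I := by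
    simp only [box, mem_univ_pi, Finset.ext_iff, Finset.mem_filter, Finset.mem_univ, true_and]
    exact forall_congr' fun i => by split_ifs with hi <;> simp [hi]
  have hunion : {x : Fin n → ℝ | #{i | x i ∈ s} = j} =
      ⋃ I ∈ Finset.powersetCard j Finset.univ, box I := by
    ext x
    simp [hmem]
  have hbox (I : Finset (Fin n)) : (Measure.pi fun _ : Fin n => ν).real (box I) =
      ν.real s ^ #I * (1 - ν.real s) ^ (n - #I) := by
    have hfactor (i : Fin n) : (ν (if i ∈ I then s else sᶜ)).toReal =
        if i ∈ I then ν.real s else 1 - ν.real s := by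
      split_ifs
      exacts [rfl, probReal_compl_eq_one_sub hs]
    rw [measureReal_def, Measure.pi_pi, ENNReal.toReal_prod]
    simp only [hfactor, Finset.prod_ite, Finset.prod_const, Finset.filter_univ_mem,
      Finset.filter_not, ← Finset.compl_eq_univ_sdiff, Finset.card_compl, Fintype.card_fin]
  rw [hunion, measureReal_biUnion_finset]
  · rw [Finset.sum_congr rfl fun I hI => by rw [hbox, (Finset.mem_powersetCard.1 hI).2]]
    simp [bernsteinPolynomial, mul_assoc]
  · exact fun I _ J _ hIJ => Set.disjoint_left.2 fun x hI hJ =>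
      hIJ ((hmem.1 hI).symm.trans (hmem.1 hJ))
  · exact fun I _ => MeasurableSet.univ_pi fun i => by split_ifs; exacts [hs, hs.compl]

lemma pi_real_card_mem_lt (n q : ℕ) {s : Set ℝ} [DecidablePred (· ∈ s)] (hs : MeasurableSet s) :
    (Measure.pi fun _ : Fin n => ν).real {x | #{i | x i ∈ s} < q} =
      (binomLower n q).eval (ν.real s) := by
  have hcard : Measurable fun x : Fin n → ℝ => #{i | x i ∈ s} := by
    simp_rw [Finset.card_filter]
    exact Finset.measurable_fun_sum _ fun i _ =>
      Measurable.ite (hs.preimage (measurable_pi_apply i)) measurable_const measurable_const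
  have hunion : {x : Fin n → ℝ | #{i | x i ∈ s} < q} =
      ⋃ j ∈ Finset.range q, {x | #{i | x i ∈ s} = j} := by
    ext x
    simp
  rw [hunion, measureReal_biUnion_finset, eval_binomLower]
  · exact Finset.sum_congr rfl fun j _ => pi_real_card_mem_eq n j hs
  · exact fun i _ j _ hij => Set.disjoint_left.2 fun x hi hj => hij (hi.symm.trans hj)
  · exact fun j _ => hcard (measurableSet_singleton j)

lemma pi_real_lt_descStat {q n : ℕ} (hq : 1 ≤ q) (hqn : q ≤ n) (t : ℝ) :
    (Measure.pi fun _ : Fin n => ν).real {x | t < descStat x (q - 1)} =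
      1 - (binomLower n q).eval (survival ν t) := by
  have hcompl : {x : Fin n → ℝ | t < descStat x (q - 1)} = {x | #{i | x i ∈ Ioi t} < q}ᶜ := by
    ext x
    simp [lt_descStat_pred_iff hq hqn]
  have hmeas := measurableSet_lt (measurable_const (a := t)) (measurable_descStat (m := n) (q - 1))
  rw [survival, ← pi_real_card_mem_lt n q measurableSet_Ioi, ← compl_compl {x : Fin n → ℝ | t < _},
    probReal_compl_eq_one_sub hmeas.compl, hcompl, compl_compl]

theorem prod_real_dominatedOverlap (hν : ν.map (survival ν) = unif01) {q n : ℕ} (hq : 1 ≤ q)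
    (hqn : q ≤ n) (k : ℕ) :
    ((Measure.pi fun _ => ν).prod ((Measure.pi fun _ => ν).prod (Measure.pi fun _ => ν))).real
      (dominatedOverlap q (k + 1) n) = 1 - (k + 1) * overlapIntegral q k n := by
  have hmeas := measurableSet_dominatedOverlap q (k + 1) n
  have hfiber (y : Fin (k + 1) → ℝ) :
      (((Measure.pi fun _ => ν).prod (Measure.pi fun _ => ν))
        (Prod.mk y ⁻¹' dominatedOverlap q (k + 1) n)).toReal =
      (1 - (binomLower n q).eval (survival ν (⨆ b, y b))) ^ 2 := by
    rw [← pi_real_lt_descStat hq hqn, sq, ← measureReal_prod_prod, measureReal_def]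
    rfl
  have hpow : ∫ u in (0 : ℝ)..1, (1 - u) ^ k = 1 / (k + 1) := by
    rw [intervalIntegral.integral_comp_sub_left (fun u => u ^ k)]
    simp
  rw [measureReal_def, Measure.prod_apply hmeas, ← integral_toReal
    (measurable_measure_prodMk_left hmeas).aemeasurable (.of_forall fun _ => measure_lt_top _ _)]
  simp_rw [hfiber]
  rw [integral_survival_ciSup hν k (g := fun u => (1 - (binomLower n q).eval u) ^ 2) (by fun_prop),
    overlapIntegral]
  simp only [mul_sub, mul_one]
  rw [intervalIntegral.integral_sub (Continuous.intervalIntegrable (by fun_prop) _ _)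
    (Continuous.intervalIntegrable (by fun_prop) _ _), hpow]
  field_simp
  ring

end OverlapProbability

section Comparison

variable {Ω : Type*} [MeasurableSpace Ω] {P : Measure Ω} [IsProbabilityMeasure P]
  {Z : ℕ → Ω → ℝ} {q : ℕ} {K : (Fin q → ℝ) → ℝ}

lemma measureReal_Ncount_eq_zero {ν : Measure ℝ} [IsProbabilityMeasure ν]
    (hsurv : ν.map (survival ν) = unif01) {n : ℕ} (hq : 1 ≤ q) (hqn : q ≤ n) (k : ℕ)
    (hZ : ∀ i, Measurable (Z i)) (hindep : iIndepFun Z P) (hlaw : ∀ i, P.map (Z i) = ν) :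
    P.real {ω | Ncount q Z (k + 1) (n + (k + 1)) ω = 0} = 1 - (k + 1) * overlapIntegral q k n := by
  have hevent : {ω | Ncount q Z (k + 1) (n + (k + 1)) ω = 0} =
      blocks Z (k + 1) n ⁻¹' dominatedOverlap q (k + 1) n :=
    Set.ext fun ω => Ncount_eq_zero_iff_blocks_mem hq hqn k.succ_pos
  rw [hevent, measureReal_def, (measurePreserving_blocks hZ hindep hlaw (k + 1) n).measure_preimage
    (measurableSet_dominatedOverlap q (k + 1) n).nullMeasurableSet, ← measureReal_def,
    prod_real_dominatedOverlap hsurv hq hqn]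

theorem setIntegral_XiRV_sub_mem_Icc {ν : Measure ℝ} [IsProbabilityMeasure ν]
    [NullSingletonClass ν] (hν : ThresholdStable ν) (hsurv : ν.map (survival ν) = unif01)
    (hK : Measurable K) (hLS : LocScaleInvariant K) (hint : Integrable id (kernelLaw ν K))
    (hq : 1 ≤ q) {ℓ m : ℕ} (hℓ : 1 ≤ ℓ) (hm : ℓ + q ≤ m) (hZ : ∀ i, Measurable (Z i))
    (hindep : iIndepFun Z P) (hlaw : ∀ i, P.map (Z i) = ν) :
    (∫ ω in {ω | Ncount q Z ℓ m ω = 0}, XiRV K Z ℓ m ω ∂P)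
        - ℓ * (∫ ω in {ω | Ncount q Z 1 m ω = 0}, XiRV K Z 1 m ω ∂P)
        + (ℓ - 1) * (∫ x, x ∂kernelLaw ν K) ^ 2 ∈
      Icc 0 ((∫ x, x ∂kernelLaw ν K) ^ 2 * q ^ 2 * ℓ * (ℓ - 1) / (m * (m - ℓ + 1))) := by
  obtain ⟨k, rfl⟩ := Nat.exists_eq_add_of_le' hℓ
  obtain ⟨n, rfl⟩ := Nat.exists_eq_add_of_le' (by omega : k + 1 ≤ m)
  have hqn : q ≤ n := by omega
  have hqn' : q ≤ n + k := by omega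
  set θ := ∫ x, x ∂kernelLaw ν K
  have hℓ_overlap : ∫ ω in {ω | Ncount q Z (k + 1) (n + (k + 1)) ω = 0},
      XiRV K Z (k + 1) (n + (k + 1)) ω ∂P = (1 - (k + 1) * overlapIntegral q k n) * θ ^ 2 := by
    rw [(setIntegral_XiRV_Ncount_eq_zero hν hK hLS hint hq hℓ hqn hZ hindep hlaw).2,
      measureReal_Ncount_eq_zero hsurv hq hqn k hZ hindep hlaw]
  have hone_overlap : ∫ ω in {ω | Ncount q Z 1 (n + (k + 1)) ω = 0},
      XiRV K Z 1 (n + (k + 1)) ω ∂P = (1 - overlapIntegral q 0 (n + k)) * θ ^ 2 := by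
    rw [← add_assoc,
      (setIntegral_XiRV_Ncount_eq_zero hν hK hLS hint hq le_rfl hqn' hZ hindep hlaw).2,
      measureReal_Ncount_eq_zero hsurv hq hqn' 0 hZ hindep hlaw, Nat.cast_zero, zero_add, one_mul]
  have hcompare := overlapIntegral_zero_sub_mem_Icc hq k n
  have hscale : 0 ≤ θ ^ 2 * (k + 1) := by positivity
  rw [hℓ_overlap, hone_overlap]
  refine ⟨(mul_nonneg hscale hcompare.1).trans_eq ?_,
    Eq.trans_le ?_ ((mul_le_mul_of_nonneg_left hcompare.2 hscale).trans_eq ?_)⟩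
  all_goals push_cast
  · ring
  · ring
  · have : (n + (k + 1) - (k + 1) + 1 : ℝ) = n + 1 := by ring
    rw [this]
    field_simp
    ring

lemma integral_id_kernelLaw (γ : ℝ) (hK : Measurable K) :
    ∫ x, x ∂kernelLaw (gpMeasure γ) K = thetaK γ K :=
  integral_map (hK.comp measurable_refVec).aemeasurable aestronglyMeasurable_id

lemma MomentCond.integrable {γ : ℝ} (hMom : MomentCond γ K) (hK : Measurable K) :
    Integrable (fun z => K (refVec z)) (gpPi γ (q - 1)) := by
  refine ⟨(hK.comp measurable_refVec).aestronglyMeasurable, ?_⟩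
  simpa [hasFiniteIntegral_iff_norm] using hMom 1 one_pos

theorem xi_on_N_zero_general (γ : ℝ) (hq : 1 ≤ q) (hK : Measurable K) (hLS : LocScaleInvariant K)
    (hint : Integrable (fun z => K (refVec z)) (gpPi γ (q - 1))) {ℓ m : ℕ} (hℓ : 1 ≤ ℓ)
    (hm : ℓ + q ≤ m) (hZ : ∀ i, Measurable (Z i)) (hindep : iIndepFun Z P)
    (hlaw : ∀ i, P.map (Z i) = gpMeasure γ) :
    IntegrableOn (XiRV K Z ℓ m) {ω | Ncount q Z ℓ m ω = 0} P ∧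
      (∫ ω in {ω | Ncount q Z ℓ m ω = 0}, XiRV K Z ℓ m ω ∂P)
        = (P {ω | Ncount q Z ℓ m ω = 0}).toReal * thetaK γ K ^ 2 ∧
      |(∫ ω in {ω | Ncount q Z ℓ m ω = 0}, XiRV K Z ℓ m ω ∂P)
          - ℓ * (∫ ω in {ω | Ncount q Z 1 m ω = 0}, XiRV K Z 1 m ω ∂P)
          + (ℓ - 1) * thetaK γ K ^ 2|
        ≤ thetaK γ K ^ 2 * q ^ 2 * ℓ * (ℓ - 1) / ((m - 1) * (m - ℓ + 1)) := by
  have hν := thresholdStable_gpMeasure γ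
  have hint' : Integrable id (kernelLaw (gpMeasure γ) K) :=
    (integrable_map_measure aestronglyMeasurable_id (hK.comp measurable_refVec).aemeasurable).2 hint
  obtain ⟨n, rfl⟩ := Nat.exists_eq_add_of_le' (by omega : ℓ ≤ m)
  obtain ⟨hXi, heq⟩ :=
    setIntegral_XiRV_Ncount_eq_zero hν hK hLS hint' hq hℓ (by omega : q ≤ n) hZ hindep hlaw
  obtain ⟨hnonneg, hle⟩ := setIntegral_XiRV_sub_mem_Icc hν (map_survival_gpMeasure γ) hK hLS hint'
    hq hℓ hm hZ hindep hlaw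
  rw [integral_id_kernelLaw γ hK] at heq hnonneg hle
  refine ⟨hXi, heq, (abs_of_nonneg hnonneg).trans_le (hle.trans ?_)⟩
  have hℓ' : (1 : ℝ) ≤ ℓ := by exact_mod_cast hℓ
  have hn : (1 : ℝ) ≤ n := by exact_mod_cast (by omega : 1 ≤ n)
  have := sub_nonneg.2 hℓ'
  push_cast
  gcongr
  · nlinarith
  · linarith
  · linarith

end Comparison

/-- Lemma: the event `N_{ℓ,m} = 0`.
`E[Ξ_{ℓ,m}; N_{ℓ,m} = 0] = P(N_{ℓ,m} = 0) θ²` and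
`|E[Ξ_{ℓ,m}; N_{ℓ,m} = 0] - ℓ E[Ξ_{1,m}; N_{1,m} = 0] + (ℓ-1)θ²|
  ≤ θ² q² ℓ(ℓ-1)/((m-1)(m-ℓ+1))`. -/
theorem xi_on_N_zero
    {Ω : Type*} [MeasurableSpace Ω] (P : Measure Ω) [IsProbabilityMeasure P]
    (γ : ℝ) (q : ℕ) (hq : 3 ≤ q)
    (K : (Fin q → ℝ) → ℝ) (hKmeas : Measurable K)
    (hLS : LocScaleInvariant K)
    (hNonconst : ∃ x y : Fin q → ℝ, K x ≠ K y)
    (hMom : MomentCond γ K)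
    (ℓ m : ℕ) (hℓ : 2 ≤ ℓ) (hm : ℓ + q ≤ m)
    (Z : ℕ → Ω → ℝ) (hZmeas : ∀ i, Measurable (Z i))
    (hIndep : iIndepFun Z P)
    (hDist : ∀ i, Measure.map (Z i) P = gpMeasure γ) :
    (∫ ω in {ω | Ncount q Z ℓ m ω = 0}, XiRV K Z ℓ m ω ∂P)
      = (P {ω | Ncount q Z ℓ m ω = 0}).toReal * (thetaK γ K) ^ 2
    ∧ |(∫ ω in {ω | Ncount q Z ℓ m ω = 0}, XiRV K Z ℓ m ω ∂P)
        - (ℓ : ℝ) * (∫ ω in {ω | Ncount q Z 1 m ω = 0}, XiRV K Z 1 m ω ∂P)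
        + ((ℓ : ℝ) - 1) * (thetaK γ K) ^ 2|
      ≤ (thetaK γ K) ^ 2 * (q : ℝ) ^ 2 * (ℓ : ℝ) * ((ℓ : ℝ) - 1) /
          (((m : ℝ) - 1) * ((m : ℝ) - (ℓ : ℝ) + 1)) := by
  exact (xi_on_N_zero_general γ (by omega) hKmeas hLS (hMom.integrable hKmeas) (by omega) hm hZmeas
    hIndep hDist).2

end
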